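/- arXiv:2106.08949 — 2 statements merged into one kernel-verified Lean document; each statement's English description precedes it below -/
import Mathlib

section
/- Let d ≥ 1 be an integer, and for each a > 0 let w(a) be the positive weight sequence determined by w_1(a)⋯w_n(a) = n^a for all n ≥ 1 (that is, w_1(a) = 1 and w_n(a) = (n/(n−1))^a for n ≥ 2). Then the family (B_{w(λ₁)} × ⋯ × B_{w(λ_d)})_{λ∈(0,∞)^d} admits a common hypercyclic algebra on ℓ1(ℕ)^d for the convolution product. -/
open scoped ENNReal
open Finset

noncomputable section

/-- The space `ℓᵖ(ℕ)` of `p`-summable complex sequences. -/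
abbrev lpC (p : ℝ≥0∞) : Type := lp (fun _ : ℕ => ℂ) p

/-- `T` is the product operator `B_{w(lam 0)} × ⋯ × B_{w(lam (d-1))}` of weighted backward
shifts, the weight sequence of the `i`-th factor being `(w (lam i) n)_{n ≥ 1}`. -/
def IsProductShift (p : ℝ≥0∞) [Fact (1 ≤ p)] (d : ℕ) (w : ℝ → ℕ → ℝ)
    (T : (Fin d → lpC p) →L[ℂ] (Fin d → lpC p)) (lam : Fin d → ℝ) : Prop :=
  ∀ (v : Fin d → lpC p) (i : Fin d) (n : ℕ),
    (T v) i n = (w (lam i) (n + 1) : ℂ) * v i (n + 1)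

/-- The family `T lam`, `lam ∈ S`, admits a common hypercyclic algebra for the coordinatewise
product: there is a non-unital subalgebra `A ≠ {0}` of `(ℓᵖ(ℕ))^d` (closed under addition,
scalar multiplication and the componentwise coordinatewise product) every nonzero element of
which is a common hypercyclic vector for the family. -/
def CommonHypercyclicAlgebraCW (p : ℝ≥0∞) [Fact (1 ≤ p)] (d : ℕ) (S : Set (Fin d → ℝ))
    (T : (Fin d → ℝ) → ((Fin d → lpC p) →L[ℂ] (Fin d → lpC p))) : Prop :=
  ∃ A : Set (Fin d → lpC p),
    (0 : Fin d → lpC p) ∈ A ∧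
    (∀ x ∈ A, ∀ y ∈ A, x + y ∈ A) ∧
    (∀ (c : ℂ), ∀ x ∈ A, c • x ∈ A) ∧
    (∀ x ∈ A, ∀ y ∈ A, ∃ z ∈ A, ∀ (i : Fin d) (n : ℕ), z i n = x i n * y i n) ∧
    (∃ x ∈ A, x ≠ 0) ∧
    (∀ x ∈ A, x ≠ 0 → ∀ lam ∈ S, Dense (Set.range fun n : ℕ => ((T lam) ^ (n + 1)) x))

/-- The family `T lam`, `lam ∈ S`, admits a common hypercyclic algebra on `(ℓ¹(ℕ))^d` for the
(componentwise) convolution product. -/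
def CommonHypercyclicAlgebraConv (d : ℕ) (S : Set (Fin d → ℝ))
    (T : (Fin d → ℝ) → ((Fin d → lpC 1) →L[ℂ] (Fin d → lpC 1))) : Prop :=
  ∃ A : Set (Fin d → lpC 1),
    (0 : Fin d → lpC 1) ∈ A ∧
    (∀ x ∈ A, ∀ y ∈ A, x + y ∈ A) ∧
    (∀ (c : ℂ), ∀ x ∈ A, c • x ∈ A) ∧
    (∀ x ∈ A, ∀ y ∈ A, ∃ z ∈ A, ∀ (i : Fin d) (n : ℕ),
        z i n = ∑ k ∈ Finset.range (n + 1), x i k * y i (n - k)) ∧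
    (∃ x ∈ A, x ≠ 0) ∧
    (∀ x ∈ A, x ≠ 0 → ∀ lam ∈ S, Dense (Set.range fun n : ℕ => ((T lam) ^ (n + 1)) x))

/-- The weight sequence with partial products `w 1 (a) ⋯ w n (a) = n ^ a`,
i.e. `w 1 (a) = 1` and `w n (a) = (n / (n - 1)) ^ a` for `n ≥ 2`. -/
def wPow (a : ℝ) (n : ℕ) : ℝ := if n ≤ 1 then 1 else ((n : ℝ) / ((n : ℝ) - 1)) ^ a

/-!
By a Baire category argument it suffices that, for parameters `lam` in a box `[a, b]^d` with `0 < a`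
and `P` monic of degree `m + 1` with bounded coefficients, every pair of polynomial tuples `u`, `v`
admits `x` near `u` such that `P(x)` visits a neighbourhood of `v` in a time bounded independently
of `lam` and `P`. A generic `x` then has dense orbits `T^n (P(x))` for all monic nonconstant `P`,
and the polynomials in `x` without constant term form the algebra.

To build `x`, perturb `u` by a small monomial `e X^σ` and by `J = M^d` tiny blocks at widely spaced
positions, one for each point `μ` of a grid of mesh `(b - a) / M` in `[a, b]^d`. In
`P(u + e X^σ + q)` the linear term `P'(u + e X^σ) q` has the leading coefficient `(m + 1) e^m`
whatever `P` is; so a block designed for `μ` becomes, after the corresponding number of shifts, `v`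
up to a factor `shiftRatio ^ (lam - μ)`, which is close to `1` when `lam` is near `μ`, since the
positions are only polynomial in `M` and `log M / M → 0`. The blocks have spacing `H = M^K`, hence
total size of order `M^d H^(-a)`. Products of two blocks and later blocks only contribute beyond a
distance `H`, where shifting amplifies by at most `(7 J)^b = O(M^(d b))`: this is negligible once
`K a > d (b + 1)`.
-/

open Filter Polynomial Topology

section Universality

variable {X Y Θ : Type*} [TopologicalSpace X] [PseudoMetricSpace Y]

/-- The points whose partial orbits `f θ 0 x, …, f θ (N - 1) x` come `ε`-close to `v`, with the
same `N` for all parameters `θ ∈ K`. -/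
def uniformlyHitting (f : Θ → ℕ → X → Y) (K : Set Θ) (v : Y) (ε : ℝ) : Set X :=
  {x | ∃ N, ∀ θ ∈ K, ∃ n < N, dist (f θ n x) v < ε}

lemma uniformlyHitting_half_subset_interior {f : Θ → ℕ → X → Y} {K : Set Θ}
    (hf : ∀ n, Equicontinuous fun θ : K => f θ n) (v : Y) {ε : ℝ} (hε : 0 < ε) :
    uniformlyHitting f K v (ε / 2) ⊆ interior (uniformlyHitting f K v ε) := by
  rintro x ⟨N, hN⟩
  have hclose : ∀ᶠ y in 𝓝 x, ∀ n ∈ range N, ∀ θ : K, dist (f θ n x) (f θ n y) < ε / 2 :=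
    (eventually_all_finset _).2 fun n _ =>
      Metric.equicontinuousAt_iff_right.1 (hf n x) _ (half_pos hε)
  refine mem_interior_iff_mem_nhds.2 (hclose.mono fun y hy => ⟨N, fun θ hθ => ?_⟩)
  obtain ⟨n, hn, hv⟩ := hN θ hθ
  refine ⟨n, hn, (dist_triangle_left _ _ (f θ n x)).trans_lt ?_⟩
  linarith [hy n (mem_range.2 hn) ⟨θ, hθ⟩]

theorem exists_forall_denseRange_of_dense_uniformlyHitting {κ : Type*} [Countable κ] [Nonempty X]
    [BaireSpace X] [TopologicalSpace.SeparableSpace Y] {f : Θ → ℕ → X → Y} {K : κ → Set Θ}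
    (hf : ∀ k n, Equicontinuous fun θ : K k => f θ n) {V : Set Y} (hV : Dense V)
    (hd : ∀ k, ∀ v ∈ V, ∀ ε > 0, Dense (uniformlyHitting f (K k) v ε)) :
    ∃ x, ∀ k, ∀ θ ∈ K k, DenseRange fun n => f θ n x := by
  have := UniformSpace.secondCountable_of_separable Y
  obtain ⟨W, hWV, hWc, hW⟩ := hV.exists_countable_dense_subset
  have := hWc.to_subtype
  have hpos (j : ℕ) : 0 < 1 / ((j : ℝ) + 1) := by positivity
  have hgeneric : Dense (⋂ t : κ × W × ℕ,
      interior (uniformlyHitting f (K t.1) t.2.1 (1 / ((t.2.2 : ℝ) + 1)))) :=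
    dense_iInter_of_isOpen (fun _ => isOpen_interior) fun t =>
      (hd t.1 t.2.1 (hWV t.2.1.2) _ (half_pos (hpos _))).mono
        (uniformlyHitting_half_subset_interior (hf t.1) _ (hpos _))
  obtain ⟨x, hx⟩ := hgeneric.nonempty
  refine ⟨x, fun k θ hθ z => Metric.mem_closure_iff.2 fun ε hε => ?_⟩
  obtain ⟨w, hw, hzw⟩ := hW.exists_dist_lt z (half_pos hε)
  obtain ⟨j, hj⟩ := exists_nat_one_div_lt (half_pos hε)
  obtain ⟨N, hN⟩ := interior_subset (Set.mem_iInter.1 hx (k, ⟨w, hw⟩, j))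
  obtain ⟨n, -, hn⟩ := hN θ hθ
  refine ⟨_, ⟨n, rfl⟩, (dist_triangle_right _ _ w).trans_lt ?_⟩
  linarith

end Universality

section PolynomialExpansion

/-- The monic polynomials of degree `m + 1` with all coefficients bounded by `R`. -/
def boundedMonic (m : ℕ) (R : ℝ) : Set ℂ[X] :=
  {P | P.Monic ∧ P.natDegree = m + 1 ∧ ∀ p, ‖P.coeff p‖ ≤ R}

lemma aeval_eq_sum_of_mem_boundedMonic {E : Type*} [Semiring E] [Algebra ℂ E] {m : ℕ} {R : ℝ}
    {P : ℂ[X]} (hP : P ∈ boundedMonic m R) (x : E) :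
    aeval x P = ∑ p ∈ range (m + 2), P.coeff p • x ^ p := by
  rw [aeval_eq_sum_range, hP.2.1]

lemma aeval_derivative_eq_sum_of_mem_boundedMonic {E : Type*} [Semiring E] [Algebra ℂ E]
    {m : ℕ} {R : ℝ} {P : ℂ[X]} (hP : P ∈ boundedMonic m R) (x : E) :
    aeval x (derivative P) = ∑ p ∈ range (m + 2), P.coeff p • ((p : E) * x ^ (p - 1)) := by
  conv_lhs => rw [P.as_sum_range_C_mul_X_pow, hP.2.1]
  simp only [map_sum, derivative_C_mul_X_pow, map_mul, map_pow, aeval_C, aeval_X, map_natCast,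
    Algebra.smul_def, mul_assoc]

/-- Bounds both the derivative and the second order Taylor remainder of a polynomial in
`boundedMonic m R` on a ball of radius `ρ ≥ 1` of a Banach algebra. -/
def expansionBound (m : ℕ) (R ρ : ℝ) : ℝ :=
  ∑ p ∈ range (m + 2), R * (p ^ 2 * ρ ^ p)

lemma expansionBound_nonneg (m : ℕ) {R ρ : ℝ} (hR : 0 ≤ R) (hρ : 0 ≤ ρ) :
    0 ≤ expansionBound m R ρ :=
  sum_nonneg fun p _ => mul_nonneg hR (mul_nonneg (by positivity) (pow_nonneg hρ p))

variable {E : Type*} [NormedCommRing E] [NormOneClass E]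

lemma norm_add_pow_sub_sub_le {x y : E} {ρ : ℝ} (hρ : 1 ≤ ρ) (hxy : ‖x‖ + ‖y‖ ≤ ρ) (p : ℕ) :
    ‖(x + y) ^ p - x ^ p - p * x ^ (p - 1) * y‖ ≤ p ^ 2 * ρ ^ p * ‖y‖ ^ 2 := by
  induction p with
  | zero => simp
  | succ p ih =>
    have : 0 ≤ ρ := zero_le_one.trans hρ
    have hx : ‖x‖ ≤ ρ := by linarith [norm_nonneg y]
    have hrec : (x + y) ^ (p + 1) - x ^ (p + 1) - ((p + 1 : ℕ) : E) * x ^ p * y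
        = (x + y) * ((x + y) ^ p - x ^ p - p * x ^ (p - 1) * y)
          + (p : E) * (x ^ (p - 1) * y ^ 2) := by
      rcases p with _ | p
      · simp
      · push_cast [Nat.add_sub_cancel]; ring
    have hnat : ‖(p : E)‖ ≤ p := by simpa using Nat.norm_cast_le (α := E) p
    have hpow : ‖x ^ (p - 1)‖ ≤ ρ ^ (p + 1) :=
      calc ‖x ^ (p - 1)‖ ≤ ‖x‖ ^ (p - 1) := norm_pow_le _ _
        _ ≤ ρ ^ (p - 1) := by gcongr
        _ ≤ ρ ^ (p + 1) := pow_le_pow_right₀ hρ (by omega)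
    rw [Nat.add_sub_cancel, hrec]
    calc _ ≤ ‖x + y‖ * ‖(x + y) ^ p - x ^ p - p * x ^ (p - 1) * y‖
          + ‖(p : E)‖ * (‖x ^ (p - 1)‖ * ‖y ^ 2‖) := by
          refine (norm_add_le _ _).trans (add_le_add (norm_mul_le _ _) ?_)
          exact (norm_mul_le _ _).trans (by gcongr; exact norm_mul_le _ _)
      _ ≤ ρ * (p ^ 2 * ρ ^ p * ‖y‖ ^ 2) + p * (ρ ^ (p + 1) * ‖y‖ ^ 2) := by
          gcongr
          · exact (norm_add_le _ _).trans hxy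
          · exact norm_pow_le _ _
      _ = (p ^ 2 + p) * ρ ^ (p + 1) * ‖y‖ ^ 2 := by ring
      _ ≤ ((p + 1 : ℕ) : ℝ) ^ 2 * ρ ^ (p + 1) * ‖y‖ ^ 2 := by
          gcongr
          push_cast
          nlinarith [Nat.cast_nonneg (α := ℝ) p]

variable [NormedAlgebra ℂ E]

lemma norm_aeval_derivative_le {x : E} {m : ℕ} {R ρ : ℝ} (hρ : 1 ≤ ρ) (hx : ‖x‖ ≤ ρ) {P : ℂ[X]}
    (hP : P ∈ boundedMonic m R) : ‖aeval x (derivative P)‖ ≤ expansionBound m R ρ := by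
  rw [aeval_derivative_eq_sum_of_mem_boundedMonic hP]
  refine norm_sum_le_of_le _ fun p _ => ?_
  have hnat : ‖(p : E)‖ ≤ p := by simpa using Nat.norm_cast_le (α := E) p
  have hsq : (p : ℝ) ≤ p ^ 2 := by exact_mod_cast Nat.le_self_pow two_ne_zero p
  have hpow : ‖x ^ (p - 1)‖ ≤ ρ ^ p :=
    calc ‖x ^ (p - 1)‖ ≤ ‖x‖ ^ (p - 1) := norm_pow_le _ _
      _ ≤ ρ ^ (p - 1) := by gcongr
      _ ≤ ρ ^ p := pow_le_pow_right₀ hρ (Nat.sub_le p 1)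
  rw [norm_smul]
  calc _ ≤ ‖P.coeff p‖ * (p ^ 2 * ρ ^ p) :=
        mul_le_mul_of_nonneg_left ((norm_mul_le _ _).trans
          (mul_le_mul (hnat.trans hsq) hpow (norm_nonneg _) (by positivity))) (norm_nonneg _)
    _ ≤ R * (p ^ 2 * ρ ^ p) := by gcongr; exact hP.2.2 p

lemma norm_aeval_add_sub_sub_le {x y : E} {m : ℕ} {R ρ : ℝ} (hρ : 1 ≤ ρ)
    (hxy : ‖x‖ + ‖y‖ ≤ ρ) {P : ℂ[X]} (hP : P ∈ boundedMonic m R) :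
    ‖aeval (x + y) P - aeval x P - aeval x (derivative P) * y‖
      ≤ expansionBound m R ρ * ‖y‖ ^ 2 := by
  rw [aeval_derivative_eq_sum_of_mem_boundedMonic hP, aeval_eq_sum_of_mem_boundedMonic hP,
    aeval_eq_sum_of_mem_boundedMonic hP, expansionBound, sum_mul, sum_mul, ← sum_sub_distrib,
    ← sum_sub_distrib]
  refine norm_sum_le_of_le _ fun p _ => ?_
  rw [smul_mul_assoc, ← smul_sub, ← smul_sub, norm_smul, mul_assoc R]
  exact mul_le_mul (hP.2.2 p) (norm_add_pow_sub_sub_le hρ hxy p) (norm_nonneg _)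
    ((norm_nonneg _).trans (hP.2.2 p))

end PolynomialExpansion

namespace lpC

lemma summable_norm (x : lpC 1) : Summable fun k => ‖x k‖ := by
  simpa using (memℓp_gen_iff (by norm_num)).1 (lp.memℓp x)

lemma norm_eq_tsum (x : lpC 1) : ‖x‖ = ∑' k, ‖x k‖ := by
  rw [lp.norm_eq_tsum_rpow (by norm_num)]
  simp

lemma memℓp_one {f : ℕ → ℂ} (hf : Summable fun k => ‖f k‖) : Memℓp f 1 :=
  (memℓp_gen_iff (by norm_num)).2 (by simpa using hf)

lemma norm_le_of_shift {x y z : lpC 1} {B δ : ℝ} (hB : 0 ≤ B) (n : ℕ)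
    (h : ∀ k, ‖y k‖ ≤ δ * ‖z k‖ + B * ‖x (n + k)‖) : ‖y‖ ≤ δ * ‖z‖ + B * ‖x‖ := by
  have hx : Summable fun k => ‖x (n + k)‖ :=
    x.summable_norm.comp_injective (add_right_injective n)
  have hz := z.summable_norm.mul_left δ
  have hshift : ∑' k, ‖x (n + k)‖ ≤ ∑' k, ‖x k‖ :=
    tsum_comp_le_tsum_of_inj x.summable_norm (fun _ => norm_nonneg _) (add_right_injective n)
  rw [norm_eq_tsum, norm_eq_tsum z, norm_eq_tsum x]
  calc ∑' k, ‖y k‖ ≤ ∑' k, (δ * ‖z k‖ + B * ‖x (n + k)‖) :=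
        y.summable_norm.tsum_le_tsum h (hz.add (hx.mul_left B))
    _ = δ * ∑' k, ‖z k‖ + B * ∑' k, ‖x (n + k)‖ := by
        rw [hz.tsum_add (hx.mul_left B), tsum_mul_left, tsum_mul_left]
    _ ≤ _ := by gcongr

lemma norm_le_mul_norm_of_shift {x y : lpC 1} {B : ℝ} (hB : 0 ≤ B) (n : ℕ)
    (h : ∀ k, ‖y k‖ ≤ B * ‖x (n + k)‖) : ‖y‖ ≤ B * ‖x‖ := by
  simpa using norm_le_of_shift (z := 0) (δ := 0) hB n (by simpa using h)

/-- The linear map underlying `ofPolynomial`, available before the ring structure of `ℓ¹`. -/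
def ofPolynomialₗ : ℂ[X] →ₗ[ℂ] lpC 1 where
  toFun p := ⟨p.coeff, memℓp_one <|
    summable_of_ne_finset_zero (s := p.support) fun k hk => by simpa using hk⟩
  map_add' p q := lp.ext <| funext fun n => coeff_add p q n
  map_smul' t p := lp.ext <| funext fun n => coeff_smul t p n

/-- The sequences of `ℓ¹` as coefficients of formal power series: convolution becomes the product
of power series. -/
def toPowerSeries (x : lpC 1) : PowerSeries ℂ := PowerSeries.mk x

lemma toPowerSeries_injective : Function.Injective toPowerSeries := fun x y h =>
  lp.ext <| funext fun n => by simpa [toPowerSeries] using congrArg (PowerSeries.coeff n) h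

scoped instance : Mul (lpC 1) where
  mul x y := ⟨fun n => ∑ k ∈ range (n + 1), x k * y (n - k), memℓp_one
    (summable_norm_sum_mul_range_of_summable_norm x.summable_norm y.summable_norm)⟩

scoped instance : One (lpC 1) where
  one := ofPolynomialₗ 1

lemma mul_apply (x y : lpC 1) (n : ℕ) : (x * y) n = ∑ k ∈ range (n + 1), x k * y (n - k) := rfl

lemma toPowerSeries_mul (x y : lpC 1) :
    toPowerSeries (x * y) = toPowerSeries x * toPowerSeries y := by
  ext n
  simp [toPowerSeries, PowerSeries.coeff_mul, mul_apply,
    Nat.sum_antidiagonal_eq_sum_range_succ_mk]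

lemma toPowerSeries_add (x y : lpC 1) :
    toPowerSeries (x + y) = toPowerSeries x + toPowerSeries y := by
  ext n
  simp only [toPowerSeries, map_add, PowerSeries.coeff_mk, lp.coeFn_add, Pi.add_apply]

lemma toPowerSeries_one : toPowerSeries 1 = 1 := by
  ext n
  exact (PowerSeries.coeff_mk n _).trans (by rw [PowerSeries.coeff_one]; exact coeff_one)

lemma norm_mul_le_mul_norm (x y : lpC 1) : ‖x * y‖ ≤ ‖x‖ * ‖y‖ := by
  have hx : Summable fun k => ‖‖x k‖‖ := by simpa using x.summable_norm
  have hy : Summable fun k => ‖‖y k‖‖ := by simpa using y.summable_norm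
  rw [norm_eq_tsum, norm_eq_tsum x, norm_eq_tsum y,
    tsum_mul_tsum_eq_tsum_sum_range_of_summable_norm hx hy]
  refine (x * y).summable_norm.tsum_le_tsum (fun n => ?_)
    (summable_norm_sum_mul_range_of_summable_norm hx hy).of_norm
  exact norm_sum_le_of_le _ fun k _ => norm_mul_le (x k) (y (n - k))

scoped instance : NormedCommRing (lpC 1) where
  __ := lp.normedAddCommGroup
  mul_assoc x y z := toPowerSeries_injective <| by simp only [toPowerSeries_mul, mul_assoc]
  one_mul x := toPowerSeries_injective <| by
    simp only [toPowerSeries_mul, toPowerSeries_one, one_mul]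
  mul_one x := toPowerSeries_injective <| by
    simp only [toPowerSeries_mul, toPowerSeries_one, mul_one]
  mul_comm x y := toPowerSeries_injective <| by simp only [toPowerSeries_mul, mul_comm]
  left_distrib x y z := toPowerSeries_injective <| by
    simp only [toPowerSeries_mul, toPowerSeries_add, mul_add]
  right_distrib x y z := toPowerSeries_injective <| by
    simp only [toPowerSeries_mul, toPowerSeries_add, add_mul]
  zero_mul x := by ext n; simp [mul_apply]
  mul_zero x := by ext n; simp [mul_apply]
  norm_mul_le := norm_mul_le_mul_norm

scoped instance : NormedAlgebra ℂ (lpC 1) where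
  __ := Algebra.ofModule (R := ℂ) (A := lpC 1)
    (fun c x y => lp.ext <| funext fun n => by simp [mul_apply, mul_sum, mul_assoc])
    (fun c x y => lp.ext <| funext fun n => by simp [mul_apply, mul_sum, mul_left_comm])
  norm_smul_le := norm_smul_le

scoped instance : NormOneClass (lpC 1) where
  norm_one := by
    rw [norm_eq_tsum, tsum_eq_single 0 fun n hn => ?_]
    · exact (congrArg norm coeff_one_zero).trans norm_one
    · exact (congrArg norm (coeff_one.trans (if_neg hn))).trans norm_zero

/-- Finitely supported sequences, written as polynomials. -/
def ofPolynomial : ℂ[X] →ₐ[ℂ] lpC 1 :=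
  AlgHom.ofLinearMap ofPolynomialₗ rfl fun p q => lp.ext <| funext fun n =>
    (coeff_mul p q n).trans (Nat.sum_antidiagonal_eq_sum_range_succ_mk _ n)

lemma ofPolynomial_apply (p : ℂ[X]) (n : ℕ) : ofPolynomial p n = p.coeff n := rfl

lemma norm_ofPolynomial_X_pow (n : ℕ) : ‖ofPolynomial (X ^ n)‖ = 1 := by
  rw [norm_eq_tsum, tsum_eq_single n fun k hk => ?_]
  · simp only [ofPolynomial_apply, coeff_X_pow_self, norm_one]
  · simp only [ofPolynomial_apply, coeff_X_pow, if_neg hk, norm_zero]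

lemma norm_ofPolynomial_X_pow_mul_le (n : ℕ) (p : ℂ[X]) :
    ‖ofPolynomial (X ^ n * p)‖ ≤ ‖ofPolynomial p‖ := by
  rw [map_mul]
  exact (norm_mul_le _ _).trans_eq (by rw [norm_ofPolynomial_X_pow, one_mul])

lemma denseRange_ofPolynomial : DenseRange ofPolynomial := by
  intro x
  refine mem_closure_of_tendsto (lp.hasSum_single (by norm_num) x) (.of_forall fun s => ?_)
  refine ⟨∑ n ∈ s, monomial n (x n), ?_⟩
  rw [map_sum]
  refine sum_congr rfl fun n _ => lp.ext <| funext fun k => ?_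
  rw [ofPolynomial_apply, coeff_monomial, lp.single_apply]
  rcases eq_or_ne k n with rfl | hk
  · simp
  · simp [hk, hk.symm]

scoped instance : TopologicalSpace.SeparableSpace (lpC 1) := by
  have hsep : TopologicalSpace.IsSeparable
      (Submodule.span ℂ (Set.range fun n : ℕ => ofPolynomial (X ^ n)) : Set (lpC 1)) :=
    (Set.countable_range _).isSeparable.span
  refine TopologicalSpace.isSeparable_univ_iff.1 (denseRange_ofPolynomial.closure_eq ▸
    (hsep.mono ?_).closure)
  rintro _ ⟨p, rfl⟩
  rw [p.as_sum_range_C_mul_X_pow, map_sum]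
  refine Submodule.sum_mem _ fun k _ => ?_
  rw [← smul_eq_C_mul, map_smul]
  exact Submodule.smul_mem _ _ (Submodule.subset_span ⟨k, rfl⟩)

end lpC

section BlockExpansion

variable {R : Type*} [CommRing R]

lemma natDegree_add_pow_sub_pow_le {u w : R[X]} {du σ : ℕ} (hu : u.natDegree ≤ du)
    (hw : w.natDegree ≤ σ) (hσ : du ≤ σ) (p : ℕ) :
    ((u + w) ^ (p + 1) - w ^ (p + 1)).natDegree ≤ p * σ + du := by
  rw [← geom_sum₂_mul, add_sub_cancel_right]
  refine natDegree_mul_le_of_le (natDegree_sum_le_of_forall_le _ _ fun i hi => ?_) hu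
  have hi : i ≤ p := Nat.lt_succ_iff.1 (mem_range.1 hi)
  have huw : (u + w).natDegree ≤ σ := natDegree_add_le_of_degree_le (hu.trans hσ) hw
  calc _ ≤ i * σ + (p - i) * σ :=
        natDegree_mul_le_of_le (natDegree_pow_le_of_le i huw) (natDegree_pow_le_of_le _ hw)
    _ = p * σ := by rw [← add_mul, Nat.add_sub_cancel' hi]

lemma coeff_comp_add_C_mul_X_pow {P u : R[X]} {m du σ t : ℕ} (e : R) (hP : P.natDegree ≤ m)
    (hu : u.natDegree ≤ du) (hσ : du < σ) (ht : m * σ + du < t + σ) :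
    (P.comp (u + C e * X ^ σ)).coeff t = if t = m * σ then P.coeff m * e ^ m else 0 := by
  have hw : (C e * X ^ σ).natDegree ≤ σ := natDegree_C_mul_X_pow_le e σ
  have hlow : ∀ p ∈ range m, (C (P.coeff p) * (u + C e * X ^ σ) ^ p).coeff t = 0 := by
    intro p hp
    have hdeg := natDegree_pow_le_of_le p (natDegree_add_le_of_degree_le (hu.trans hσ.le) hw)
    have hpσ : (p + 1) * σ ≤ m * σ := Nat.mul_le_mul_right σ (mem_range.1 hp)
    rw [coeff_C_mul, coeff_eq_zero_of_natDegree_lt (hdeg.trans_lt (by linarith)), mul_zero]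
  have htop : ((u + C e * X ^ σ) ^ m).coeff t = ((C e * X ^ σ) ^ m).coeff t := by
    rcases m with _ | p
    · simp
    · rw [← sub_eq_zero, ← coeff_sub]
      refine coeff_eq_zero_of_natDegree_lt
        ((natDegree_add_pow_sub_pow_le hu hw hσ.le p).trans_lt ?_)
      linarith
  rw [comp, eval₂_eq_sum_range' C (Nat.lt_succ_iff.2 hP), finsetSum_coeff, sum_range_succ,
    sum_eq_zero hlow, zero_add, coeff_C_mul, htop, mul_pow, ← C_pow, ← pow_mul, coeff_C_mul_X_pow,
    mul_comm σ]
  split_ifs <;> simp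

lemma coeff_mul_X_pow_sub_mul {Q r : R[X]} {A : R} {s D n : ℕ}
    (hQ : ∀ t, s ≤ t + D → Q.coeff t = if t = s then A else 0) (hr : r.natDegree ≤ D)
    (hn : s ≤ n) (k : ℕ) : (Q * (X ^ (n - s) * r)).coeff (n + k) = A * r.coeff k := by
  rw [mul_left_comm, coeff_X_pow_mul', if_pos (by omega), show n + k - (n - s) = s + k by omega,
    coeff_mul, sum_eq_single (s, k), hQ s (by omega), if_pos rfl]
  · rintro ⟨t, i⟩ hti hne
    rw [HasAntidiagonal.mem_antidiagonal] at hti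
    rcases lt_or_ge D i with hi | hi
    · rw [coeff_eq_zero_of_natDegree_lt (hr.trans_lt hi), mul_zero]
    · rw [hQ t (by omega), if_neg (by rintro rfl; exact hne (by ext <;> simp; omega)), zero_mul]
  · simp

variable {ι : Type*} [Fintype ι]

/-- The polynomial carrying, for each `l`, a copy of `r l` shifted to position `n l - s`. -/
def blockSum (n : ι → ℕ) (s : ℕ) (r : ι → R[X]) : R[X] :=
  ∑ l, X ^ (n l - s) * r l

variable [LinearOrder ι] [LocallyFiniteOrderTop ι]

/-- The part of `P (g + q)`, `q = blockSum n s r`, which perturbs the block read off at position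
`n j`: the linear contribution of the later blocks and the second order Taylor remainder. -/
def blockError (P g : R[X]) (n : ι → ℕ) (s : ℕ) (r : ι → R[X]) (j : ι) : R[X] :=
  (derivative P).comp g * ∑ l ∈ Ioi j, X ^ (n l - s) * r l
    + (P.comp (g + blockSum n s r) - P.comp g - (derivative P).comp g * blockSum n s r)

lemma coeff_comp_add_blockSum {P g : R[X]} {n : ι → ℕ} {s D : ℕ} {r : ι → R[X]} {A : R} {j : ι}
    (hP : (P.comp g).natDegree < n j)
    (hQ : ∀ t, s ≤ t + D → ((derivative P).comp g).coeff t = if t = s then A else 0)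
    (hr : ∀ l, (r l).natDegree ≤ D) (hs : ∀ l, s ≤ n l) (hn : ∀ l < j, n l + D < n j) (k : ℕ) :
    (P.comp (g + blockSum n s r)).coeff (n j + k)
      = A * (r j).coeff k + (blockError P g n s r j).coeff (n j + k) := by
  have hearlier : ∀ l < j, ((derivative P).comp g * (X ^ (n l - s) * r l)).coeff (n j + k) = 0 := by
    intro l hl
    have hpos : n j + k = n l + (n j + k - n l) := by have := hn l hl; omega
    rw [hpos, coeff_mul_X_pow_sub_mul hQ (hr l) (hs l),
      coeff_eq_zero_of_natDegree_lt ((hr l).trans_lt (by have := hn l hl; omega)), mul_zero]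
  have hsplit : ((derivative P).comp g * blockSum n s r).coeff (n j + k) = A * (r j).coeff k
      + ((derivative P).comp g * ∑ l ∈ Ioi j, X ^ (n l - s) * r l).coeff (n j + k) := by
    simp only [blockSum, mul_sum, finsetSum_coeff]
    rw [← coeff_mul_X_pow_sub_mul hQ (hr j) (hs j) k]
    exact (sum_subset (subset_univ (Ici j)) fun l _ hl =>
      hearlier l (not_le.1 fun h => hl (mem_Ici.2 h))).symm.trans (add_sum_Ioi_eq_sum_Ici j).symm
  have hlow : (P.comp g).coeff (n j + k) = 0 := coeff_eq_zero_of_natDegree_lt (by omega)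
  rw [blockError, coeff_add, coeff_sub, coeff_sub, hlow, hsplit]
  ring

lemma X_pow_dvd_blockError (P g : R[X]) {n : ι → ℕ} {s H N : ℕ} (r : ι → R[X]) {j : ι}
    (hN : ∀ l, N + s ≤ n l) (hjN : n j + H ≤ 2 * N) (hgap : ∀ l, j < l → n j + H + s ≤ n l) :
    X ^ (n j + H) ∣ blockError P g n s r j := by
  have hdvd : X ^ N ∣ blockSum n s r := dvd_sum fun l _ =>
    (pow_dvd_pow X (Nat.le_sub_of_add_le (hN l))).mul_right _
  refine dvd_add (dvd_mul_of_dvd_right (dvd_sum fun l hl => ?_) _) ?_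
  · exact (pow_dvd_pow X (Nat.le_sub_of_add_le (hgap l (mem_Ioi.1 hl)))).mul_right _
  · obtain ⟨S, hS⟩ := binomExpansion (P.map C) g (blockSum n s r)
    simp only [derivative_map, eval_map] at hS
    have hsq : X ^ (n j + H) ∣ blockSum n s r ^ 2 :=
      (pow_dvd_pow X hjN).trans (by rw [mul_comm 2, pow_mul]; exact pow_dvd_pow_of_dvd hdvd 2)
    rw [comp, comp, comp, hS, add_assoc, add_sub_cancel_left, add_sub_cancel_left]
    exact hsq.mul_left S

end BlockExpansion

section BlockExpansionNorm

open lpC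

variable {ι : Type*} [Fintype ι]

lemma norm_ofPolynomial_sum_X_pow_mul_le (t : Finset ι) (a : ι → ℕ) (r : ι → ℂ[X]) :
    ‖ofPolynomial (∑ l ∈ t, X ^ a l * r l)‖ ≤ ∑ l, ‖ofPolynomial (r l)‖ := by
  rw [map_sum]
  exact (norm_sum_le_of_le _ fun l _ => norm_ofPolynomial_X_pow_mul_le (a l) (r l)).trans
    (sum_le_univ_sum_of_nonneg fun _ => norm_nonneg _)

lemma ofPolynomial_comp (P g : ℂ[X]) : ofPolynomial (P.comp g) = aeval (ofPolynomial g) P := by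
  rw [aeval_algHom_apply]
  rfl

variable [LinearOrder ι] [LocallyFiniteOrderTop ι]

lemma norm_ofPolynomial_blockError_le {m : ℕ} {R ρ κ : ℝ} {P g : ℂ[X]} (hP : P ∈ boundedMonic m R)
    (hρ : 1 ≤ ρ) (hg : ‖ofPolynomial g‖ + κ ≤ ρ) (n : ι → ℕ) (s : ℕ) {r : ι → ℂ[X]}
    (hr : ∑ l, ‖ofPolynomial (r l)‖ ≤ κ) (hκ : κ ≤ 1) (j : ι) :
    ‖ofPolynomial (blockError P g n s r j)‖ ≤ 2 * expansionBound m R ρ * κ := by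
  have hκ0 : 0 ≤ κ := (sum_nonneg fun _ _ => norm_nonneg _).trans hr
  have hq : ‖ofPolynomial (blockSum n s r)‖ ≤ κ :=
    (norm_ofPolynomial_sum_X_pow_mul_le _ _ r).trans hr
  have hlinear := norm_aeval_derivative_le hρ ((le_add_of_nonneg_right hκ0).trans hg) hP
  have hB : 0 ≤ expansionBound m R ρ := (norm_nonneg _).trans hlinear
  rw [blockError]
  simp only [map_add, map_sub, map_mul, ofPolynomial_comp]
  calc _ ≤ expansionBound m R ρ * κ + expansionBound m R ρ * κ ^ 2 := by
        refine (norm_add_le _ _).trans (add_le_add ((norm_mul_le _ _).trans ?_) ?_)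
        · exact mul_le_mul hlinear ((norm_ofPolynomial_sum_X_pow_mul_le _ _ r).trans hr)
            (norm_nonneg _) hB
        · exact (norm_aeval_add_sub_sub_le hρ ((add_le_add_right hq _).trans hg) hP).trans
            (by gcongr)
    _ ≤ expansionBound m R ρ * κ + expansionBound m R ρ * κ := by
        gcongr
        exact pow_le_of_le_one hκ0 hκ two_ne_zero
    _ = _ := by ring

end BlockExpansionNorm

section ShiftWeight

/-- The base of `shiftWeight`; the two maxima only serve to give index `0` the value `1`. -/
def shiftRatio (n k : ℕ) : ℝ := max (n + k : ℝ) 1 / max (k : ℝ) 1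

/-- The product `w (k + 1) ⋯ w (k + n)` of weights of `wPow a`, by which the `n`-th power of the
weighted shift multiplies the coordinate moved to position `k`. -/
def shiftWeight (a : ℝ) (n k : ℕ) : ℝ := shiftRatio n k ^ a

lemma one_le_shiftRatio (n k : ℕ) : 1 ≤ shiftRatio n k :=
  (one_le_div (by positivity)).2 (max_le_max_right 1 (by simp))

lemma shiftRatio_pos (n k : ℕ) : 0 < shiftRatio n k := one_pos.trans_le (one_le_shiftRatio n k)

lemma shiftWeight_pos (a : ℝ) (n k : ℕ) : 0 < shiftWeight a n k :=
  Real.rpow_pos_of_pos (shiftRatio_pos n k) a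

lemma shiftRatio_le_add {n : ℕ} (hn : 1 ≤ n) (k : ℕ) : shiftRatio n k ≤ n + k := by
  have hn' : (1 : ℝ) ≤ n := by exact_mod_cast hn
  rw [shiftRatio, max_eq_left (by linarith [Nat.cast_nonneg (α := ℝ) k])]
  exact div_le_self (by positivity) (le_max_right _ _)

lemma shiftRatio_le_of_add_le_mul {n k : ℕ} {C : ℝ} (hC : 1 ≤ C) (h : (n + k : ℝ) ≤ C * k) :
    shiftRatio n k ≤ C := by
  refine (div_le_iff₀ (by positivity)).2 (max_le (h.trans ?_) ?_)
  · gcongr; exact le_max_left _ _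
  · exact hC.trans (le_mul_of_one_le_right (by linarith) (le_max_right _ _))

lemma shiftRatio_one_le_two (k : ℕ) : shiftRatio 1 k ≤ 2 := by
  refine (div_le_iff₀ (by positivity)).2 (max_le ?_ ?_) <;> push_cast <;>
    linarith [le_max_left (k : ℝ) 1, le_max_right (k : ℝ) 1]

lemma div_le_shiftRatio {n k D N : ℕ} (hk : k ≤ D) (hn : N ≤ n) :
    (N : ℝ) / (D + 1) ≤ shiftRatio n k := by
  have hk' : (k : ℝ) ≤ D := by exact_mod_cast hk
  have hn' : (N : ℝ) ≤ n := by exact_mod_cast hn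
  refine div_le_div₀ (by positivity) (le_max_of_le_left ?_) (by positivity) (max_le ?_ ?_) <;>
    linarith [Nat.cast_nonneg (α := ℝ) k]

lemma shiftWeight_le {a b C : ℝ} {n k : ℕ} (ha : 0 ≤ a) (hab : a ≤ b) (hC : shiftRatio n k ≤ C) :
    shiftWeight a n k ≤ C ^ b :=
  (Real.rpow_le_rpow_of_exponent_le (one_le_shiftRatio n k) hab).trans
    (Real.rpow_le_rpow (shiftRatio_pos n k).le hC (ha.trans hab))

lemma inv_shiftWeight_le {μ a : ℝ} {n k D N : ℕ} (ha : 0 ≤ a) (hμ : a ≤ μ) (hk : k ≤ D)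
    (hN : 0 < N) (hn : N ≤ n) : (shiftWeight μ n k)⁻¹ ≤ ((D + 1 : ℝ) / N) ^ a := by
  have hpos : (0 : ℝ) < N / (D + 1) := by positivity
  rw [← inv_div, Real.inv_rpow hpos.le]
  refine inv_anti₀ (Real.rpow_pos_of_pos hpos a) ?_
  exact (Real.rpow_le_rpow hpos.le (div_le_shiftRatio hk hn) ha).trans
    (Real.rpow_le_rpow_of_exponent_le (one_le_shiftRatio n k) hμ)

lemma abs_shiftWeight_div_sub_one_le {a μ δ Y : ℝ} {n k : ℕ} (hY : shiftRatio n k ≤ Y)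
    (hδ : |a - μ| * Real.log Y ≤ δ) (hδ1 : δ ≤ 1) :
    |shiftWeight a n k / shiftWeight μ n k - 1| ≤ 2 * δ := by
  have hlog : |Real.log (shiftRatio n k) * (a - μ)| ≤ δ := by
    rw [abs_mul, abs_of_nonneg (Real.log_nonneg (one_le_shiftRatio n k)), mul_comm]
    refine le_trans ?_ hδ
    gcongr
    exact shiftRatio_pos n k
  rw [shiftWeight, shiftWeight, ← Real.rpow_sub (shiftRatio_pos n k),
    Real.rpow_def_of_pos (shiftRatio_pos n k)]
  exact (Real.abs_exp_sub_one_le (hlog.trans hδ1)).trans (by gcongr)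

lemma wPow_succ (a : ℝ) (k : ℕ) : wPow a (k + 1) = shiftWeight a 1 k := by
  rcases k with _ | k
  · simp [wPow, shiftWeight, shiftRatio]
  · have h1 : (1 : ℝ) ≤ k + 1 := by linarith [Nat.cast_nonneg (α := ℝ) k]
    rw [wPow, if_neg (by omega), shiftWeight, shiftRatio]
    push_cast
    rw [max_eq_left h1, max_eq_left (by linarith), add_sub_cancel_right, add_comm (1 : ℝ)]

lemma shiftRatio_mul_shiftRatio (n k : ℕ) :
    shiftRatio n k * shiftRatio 1 (k + n) = shiftRatio (n + 1) k := by
  have hpos : max (n + k : ℝ) 1 ≠ 0 := by positivity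
  rw [shiftRatio, shiftRatio, shiftRatio]
  push_cast
  rw [add_comm (k : ℝ) n, mul_comm, div_mul_div_cancel₀ hpos, ← add_assoc, add_comm (1 : ℝ)]

lemma prod_wPow (a : ℝ) (n k : ℕ) : ∏ t ∈ range n, wPow a (k + t + 1) = shiftWeight a n k := by
  induction n with
  | zero =>
    have hpos : max (k : ℝ) 1 ≠ 0 := by positivity
    simp [shiftWeight, shiftRatio, hpos]
  | succ n ih =>
    rw [prod_range_succ, ih, wPow_succ, shiftWeight, shiftWeight, shiftWeight,
      ← Real.mul_rpow (shiftRatio_pos _ _).le (shiftRatio_pos _ _).le, shiftRatio_mul_shiftRatio]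

end ShiftWeight

namespace IsProductShift

variable {d : ℕ} {lam : Fin d → ℝ}

lemma pow_apply {p : ℝ≥0∞} [Fact (1 ≤ p)] {w : ℝ → ℕ → ℝ}
    {T : (Fin d → lpC p) →L[ℂ] (Fin d → lpC p)} (hT : IsProductShift p d w T lam)
    (v : Fin d → lpC p) (i : Fin d) (n k : ℕ) :
    (T ^ n) v i k = ((∏ t ∈ range n, w (lam i) (k + t + 1) : ℝ) : ℂ) * v i (n + k) := by
  induction n generalizing k with
  | zero => simp
  | succ n ih =>
    have hindex (t : ℕ) : k + 1 + t + 1 = k + (t + 1) + 1 := by ring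
    rw [pow_succ', mul_apply_eq_comp, hT, ih, prod_range_succ', Complex.ofReal_mul, add_zero,
      show n + (k + 1) = n + 1 + k by ring]
    simp only [hindex]
    ring

lemma pow_apply_eq_shiftWeight {T : (Fin d → lpC 1) →L[ℂ] (Fin d → lpC 1)}
    (hT : IsProductShift 1 d wPow T lam) (v : Fin d → lpC 1) (i : Fin d) (n k : ℕ) :
    (T ^ n) v i k = (shiftWeight (lam i) n k : ℂ) * v i (n + k) := by
  rw [hT.pow_apply, prod_wPow]

lemma norm_le {T : (Fin d → lpC 1) →L[ℂ] (Fin d → lpC 1)} {b : ℝ}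
    (hT : IsProductShift 1 d wPow T lam) (hlam : ∀ i, lam i ∈ Set.Icc 0 b) :
    ‖T‖ ≤ 2 ^ b := by
  refine T.opNorm_le_bound (by positivity) fun v =>
    (pi_norm_le_iff_of_nonneg (by positivity)).2 fun i => ?_
  have hcoord : ‖T v i‖ ≤ 2 ^ b * ‖v i‖ :=
    lpC.norm_le_mul_norm_of_shift (by positivity) 1 fun k => by
      rw [hT, wPow_succ, norm_mul, Complex.norm_real,
        Real.norm_of_nonneg (shiftWeight_pos _ _ _).le, add_comm 1 k]
      gcongr
      exact shiftWeight_le (hlam i).1 (hlam i).2 (shiftRatio_one_le_two k)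
  exact hcoord.trans (by gcongr; exact norm_le_pi_norm v i)

end IsProductShift

section Net

lemma exists_lt_abs_sub_add_mul_le {a t δ : ℝ} (ha : a ≤ t) {M : ℕ} (hM : 1 ≤ M)
    (ht : t ≤ a + M * δ) : ∃ l < M, |t - (a + l * δ)| ≤ δ := by
  induction M, hM using Nat.le_induction with
  | base =>
    refine ⟨0, one_pos, ?_⟩
    rw [Nat.cast_one, one_mul] at ht
    rw [Nat.cast_zero, zero_mul, add_zero, abs_of_nonneg] <;> linarith
  | succ M _ ih =>
    rcases le_total t (a + M * δ) with h | h
    · obtain ⟨l, hl, hlt⟩ := ih h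
      exact ⟨l, hl.trans M.lt_succ_self, hlt⟩
    · refine ⟨M, M.lt_succ_self, ?_⟩
      rw [abs_of_nonneg] <;> push_cast at ht <;> linarith

lemma exists_finite_net (d : ℕ) {a b : ℝ} (hab : a ≤ b) {M : ℕ} (hM : 1 ≤ M) :
    ∃ μ : Fin (M ^ d) → Fin d → ℝ, (∀ l i, a ≤ μ l i) ∧
      ∀ lam : Fin d → ℝ, (∀ i, lam i ∈ Set.Icc a b) → ∃ l, ∀ i, |lam i - μ l i| ≤ (b - a) / M := by
  have hδ : 0 ≤ (b - a) / M := div_nonneg (sub_nonneg.2 hab) M.cast_nonneg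
  have hM0 : (M : ℝ) ≠ 0 := by positivity
  refine ⟨fun l i => a + (finFunctionFinEquiv.symm l i : ℕ) * ((b - a) / M),
    fun _ _ => le_add_of_nonneg_right (mul_nonneg (Nat.cast_nonneg _) hδ), fun lam hlam => ?_⟩
  have hright (i : Fin d) : lam i ≤ a + M * ((b - a) / M) := by
    rw [mul_div_cancel₀ _ hM0]; linarith [(hlam i).2]
  choose c hcM hc using fun i => exists_lt_abs_sub_add_mul_le (hlam i).1 hM (hright i)
  exact ⟨finFunctionFinEquiv fun i => ⟨c i, hcM i⟩, fun i => by simpa using hc i⟩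

lemma tendsto_div_mul_log_mul_pow (w : ℝ) {c : ℝ} (hc : 0 < c) (e : ℕ) :
    Tendsto (fun M : ℕ => w / M * Real.log (c * (M : ℝ) ^ e)) atTop (𝓝 0) := by
  have hlog : Tendsto (fun M : ℕ => Real.log M / M) atTop (𝓝 0) :=
    Real.isLittleO_log_id_atTop.tendsto_div_nhds_zero.comp tendsto_natCast_atTop_atTop
  have hsum := ((tendsto_const_div_atTop_nhds_zero_nat (w * Real.log c)).add
    (hlog.const_mul (w * e)))
  rw [mul_zero, add_zero] at hsum
  refine hsum.congr' ?_
  filter_upwards [eventually_ge_atTop 1] with M hM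
  rw [Real.log_mul hc.ne' (by positivity), Real.log_pow]
  ring

lemma tendsto_rpow_mul_pow_mul_div_rpow {a b c D : ℝ} {d K : ℕ} (hD : 0 ≤ D) (hc : 0 ≤ c)
    (hK : d * (b + 1) < K * a) :
    Tendsto (fun M : ℕ => (c * (M : ℝ) ^ d) ^ b * ((M : ℝ) ^ d * (D / (M : ℝ) ^ K) ^ a))
      atTop (𝓝 0) := by
  have hpow := ((tendsto_rpow_neg_atTop (sub_pos.2 hK)).comp
    tendsto_natCast_atTop_atTop).const_mul (c ^ b * D ^ a)
  rw [mul_zero] at hpow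
  refine hpow.congr' ?_
  filter_upwards [eventually_ge_atTop 1] with M hM
  have hM0 : (0 : ℝ) < M := by exact_mod_cast hM
  have hexp : -(K * a - d * (b + 1)) = d * b + d - K * a := by ring
  simp only [Function.comp_apply]
  rw [hexp, Real.mul_rpow hc (by positivity), Real.div_rpow hD (by positivity),
    Real.rpow_sub hM0, Real.rpow_add hM0, Real.rpow_mul hM0.le, Real.rpow_mul hM0.le]
  simp only [Real.rpow_natCast]
  ring

end Net

section Correction

open lpC

/-- The polynomial that, multiplied by `A` and moved to position `n`, is sent to `v` by the `n`-th
power of the shift with weights `wPow μ`. -/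
def correctionBlock (v : ℂ[X]) (A : ℂ) (μ : ℝ) (n : ℕ) : ℂ[X] :=
  ∑ k ∈ range (v.natDegree + 1), monomial k (v.coeff k / (A * shiftWeight μ n k))

lemma coeff_correctionBlock (v : ℂ[X]) (A : ℂ) (μ : ℝ) (n k : ℕ) :
    (correctionBlock v A μ n).coeff k = v.coeff k / (A * shiftWeight μ n k) := by
  simp only [correctionBlock, finsetSum_coeff, coeff_monomial, sum_ite_eq', mem_range]
  split_ifs with hk
  · rfl
  · rw [coeff_eq_zero_of_natDegree_lt (by omega), zero_div]

lemma natDegree_correctionBlock_le (v : ℂ[X]) (A : ℂ) (μ : ℝ) (n : ℕ) :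
    (correctionBlock v A μ n).natDegree ≤ v.natDegree :=
  natDegree_le_iff_coeff_eq_zero.2 fun k hk => by
    rw [coeff_correctionBlock, coeff_eq_zero_of_natDegree_lt hk, zero_div]

lemma norm_ofPolynomial_correctionBlock_le {v : ℂ[X]} (A : ℂ) {μ a : ℝ} {n D N : ℕ}
    (hv : v.natDegree ≤ D) (ha : 0 ≤ a) (hμ : a ≤ μ) (hN : 0 < N) (hn : N ≤ n) :
    ‖ofPolynomial (correctionBlock v A μ n)‖ ≤ ((D + 1 : ℝ) / N) ^ a / ‖A‖ * ‖ofPolynomial v‖ := by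
  refine norm_le_mul_norm_of_shift (by positivity) 0 fun k => ?_
  rw [ofPolynomial_apply, ofPolynomial_apply, coeff_correctionBlock, zero_add]
  rcases le_or_gt k D with hk | hk
  · rw [norm_div, norm_mul, Complex.norm_real, Real.norm_of_nonneg (shiftWeight_pos _ _ _).le]
    calc ‖v.coeff k‖ / (‖A‖ * shiftWeight μ n k)
        = (shiftWeight μ n k)⁻¹ / ‖A‖ * ‖v.coeff k‖ := by rw [div_eq_mul_inv, mul_inv]; ring
      _ ≤ _ := by gcongr; exact inv_shiftWeight_le ha hμ hk hN hn
  · simp [coeff_eq_zero_of_natDegree_lt (hv.trans_lt hk)]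

lemma norm_sub_ofPolynomial_le_of_eq_shift {F v h : ℂ[X]} {y : lpC 1} {A : ℂ} {a μ δ B : ℝ}
    {n H : ℕ} (hA : A ≠ 0) (hy : ∀ k, y k = shiftWeight a n k * F.coeff (n + k))
    (hF : ∀ k, F.coeff (n + k) = A * (correctionBlock v A μ n).coeff k + h.coeff (n + k))
    (hh : X ^ (n + H) ∣ h) (hB : 0 ≤ B) (hhigh : ∀ k, H ≤ k → shiftWeight a n k ≤ B)
    (hlow : ∀ k ≤ v.natDegree, |shiftWeight a n k / shiftWeight μ n k - 1| ≤ δ) :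
    ‖y - ofPolynomial v‖ ≤ δ * ‖ofPolynomial v‖ + B * ‖ofPolynomial h‖ := by
  refine norm_le_of_shift hB n fun k => ?_
  have hμ : (shiftWeight μ n k : ℂ) ≠ 0 := by exact_mod_cast (shiftWeight_pos μ n k).ne'
  have hcoord : (y - ofPolynomial v) k
      = ((shiftWeight a n k / shiftWeight μ n k - 1 : ℝ) : ℂ) * v.coeff k
        + (shiftWeight a n k : ℂ) * h.coeff (n + k) := by
    rw [lp.coeFn_sub, Pi.sub_apply, hy, hF, coeff_correctionBlock, ofPolynomial_apply]
    push_cast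
    field_simp
    ring
  rw [hcoord, ofPolynomial_apply, ofPolynomial_apply]
  refine (norm_add_le _ _).trans (add_le_add ?_ ?_) <;>
    rw [norm_mul, Complex.norm_real, Real.norm_eq_abs]
  · rcases le_or_gt k v.natDegree with hk | hk
    · exact mul_le_mul_of_nonneg_right (hlow k hk) (norm_nonneg _)
    · simp [coeff_eq_zero_of_natDegree_lt hk]
  · rcases le_or_gt H k with hk | hk
    · rw [abs_of_pos (shiftWeight_pos _ _ _)]
      exact mul_le_mul_of_nonneg_right (hhigh k hk) (norm_nonneg _)
    · simp [X_pow_dvd_iff.1 hh (n + k) (by omega)]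

end Correction

section HittingVector

open lpC

/-- The positions of `J` consecutive blocks of length `2 H`. They lie in `[4 J H, 6 J H)`, so that
products of two blocks fall beyond all of them. -/
def blockPos (J H : ℕ) (l : Fin J) : ℕ := 2 * H * (2 * J + l)

lemma blockPos_add_le_of_lt {J H : ℕ} {j l : Fin J} (h : j < l) :
    blockPos J H j + 2 * H ≤ blockPos J H l := by
  have hjl : (j : ℕ) + 1 ≤ l := h
  calc 2 * H * (2 * J + j) + 2 * H = 2 * H * (2 * J + (j + 1)) := by ring
    _ ≤ 2 * H * (2 * J + l) := by gcongr

lemma le_blockPos (J H : ℕ) (l : Fin J) : 4 * (J * H) ≤ blockPos J H l :=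
  calc 4 * (J * H) = 2 * H * (2 * J) := by ring
    _ ≤ 2 * H * (2 * J + l) := by gcongr; exact Nat.le_add_right _ _

lemma blockPos_add_le (J H : ℕ) (l : Fin J) : blockPos J H l + 2 * H ≤ 6 * (J * H) :=
  calc 2 * H * (2 * J + l) + 2 * H = 2 * H * (2 * J + (l + 1)) := by ring
    _ ≤ 2 * H * (2 * J + J) := by gcongr; exact l.2
    _ = 6 * (J * H) := by ring

lemma le_mul_of_fin {J : ℕ} (H : ℕ) (l : Fin J) : H ≤ J * H :=
  Nat.le_mul_of_pos_left H l.pos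

/-- The leading coefficient of `P' (u + e X ^ σ)` for `P` monic of degree `m + 1` and `σ` large. -/
def derivLead (m : ℕ) (e : ℂ) : ℂ := (m + 1) * e ^ m

lemma derivLead_ne_zero (m : ℕ) {e : ℂ} (he : e ≠ 0) : derivLead m e ≠ 0 :=
  mul_ne_zero (Nat.cast_add_one_ne_zero m) (pow_ne_zero m he)

lemma coeff_derivative_comp_of_mem_boundedMonic {m D σ t : ℕ} {R : ℝ} {P u : ℂ[X]}
    (hP : P ∈ boundedMonic m R) (e : ℂ) (hu : u.natDegree ≤ D) (hσ : D < σ)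
    (ht : m * σ + D < t + σ) :
    ((derivative P).comp (u + C e * X ^ σ)).coeff t = if t = m * σ then derivLead m e else 0 := by
  have hlead : (derivative P).coeff m = m + 1 := by
    rw [coeff_derivative, ← hP.2.1, hP.1.coeff_natDegree, one_mul]
  rw [coeff_comp_add_C_mul_X_pow e ((natDegree_derivative_le P).trans (by rw [hP.2.1]; simp)) hu hσ
    ht, hlead, derivLead]

/-- The polynomial which a suitable power of the shift with weights `wPow (μ l)` turns into `v`
after multiplication by `derivLead m e`, prepared for position `blockPos J H l`. -/
def hittingBlock (m H : ℕ) (v : ℂ[X]) (e : ℂ) {J : ℕ} (μ : Fin J → ℝ) (l : Fin J) : ℂ[X] :=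
  correctionBlock v (derivLead m e) (μ l) (blockPos J H l)

/-- The perturbation of `u` whose image under every `P ∈ boundedMonic m R` comes close to `v` along
the orbit of the shift with weights `wPow a`, for each `a` near one of the `μ l`. -/
def hittingVector (m σ H : ℕ) (u v : ℂ[X]) (e : ℂ) {J : ℕ} (μ : Fin J → ℝ) : ℂ[X] :=
  u + C e * X ^ σ + blockSum (blockPos J H) (m * σ) (hittingBlock m H v e μ)

lemma sum_norm_ofPolynomial_hittingBlock_le {v : ℂ[X]} {D H J : ℕ} {a : ℝ} (m : ℕ) (e : ℂ)
    {μ : Fin J → ℝ} (hv : v.natDegree ≤ D) (hH : 0 < H) (ha : 0 ≤ a) (hμ : ∀ l, a ≤ μ l) :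
    ∑ l, ‖ofPolynomial (hittingBlock m H v e μ l)‖
      ≤ J * ((D + 1 : ℝ) / H) ^ a * (‖ofPolynomial v‖ / ‖derivLead m e‖) :=
  calc _ ≤ ∑ _l : Fin J, ((D + 1 : ℝ) / H) ^ a / ‖derivLead m e‖ * ‖ofPolynomial v‖ :=
        sum_le_sum fun l _ => norm_ofPolynomial_correctionBlock_le _ hv ha (hμ l) hH <| by
          have := le_mul_of_fin H l
          have := le_blockPos J H l
          omega
    _ = _ := by rw [sum_const, card_univ, Fintype.card_fin, nsmul_eq_mul]; ring

lemma norm_ofPolynomial_add_C_mul_X_pow_le (u : ℂ[X]) (e : ℂ) (σ : ℕ) :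
    ‖ofPolynomial (u + C e * X ^ σ)‖ ≤ ‖ofPolynomial u‖ + ‖e‖ := by
  rw [map_add, ← smul_eq_C_mul, map_smul]
  refine (norm_add_le _ _).trans_eq ?_
  rw [norm_smul, norm_ofPolynomial_X_pow, mul_one]

lemma norm_ofPolynomial_hittingVector_sub_le (m σ H : ℕ) (u v : ℂ[X]) (e : ℂ) {J : ℕ}
    (μ : Fin J → ℝ) : ‖ofPolynomial (hittingVector m σ H u v e μ) - ofPolynomial u‖
      ≤ ‖e‖ + ∑ l, ‖ofPolynomial (hittingBlock m H v e μ l)‖ := by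
  have hmonomial := norm_ofPolynomial_add_C_mul_X_pow_le 0 e σ
  rw [zero_add, map_zero, norm_zero, zero_add] at hmonomial
  rw [hittingVector, ← map_sub, add_assoc, add_sub_cancel_left, map_add]
  exact (norm_add_le _ _).trans
    (add_le_add hmonomial (norm_ofPolynomial_sum_X_pow_mul_le univ _ _))

lemma coeff_comp_hittingVector {m D σ H J : ℕ} {u v P : ℂ[X]} {R : ℝ}
    (hP : P ∈ boundedMonic m R) (e : ℂ) (hu : u.natDegree ≤ D) (hv : v.natDegree ≤ D)
    (hσ : 2 * D < σ) (hH : (m + 1) * σ ≤ H) (μ : Fin J → ℝ) (j : Fin J) (k : ℕ) :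
    (P.comp (hittingVector m σ H u v e μ)).coeff (blockPos J H j + k)
      = derivLead m e * (hittingBlock m H v e μ j).coeff k
        + (blockError P (u + C e * X ^ σ) (blockPos J H) (m * σ) (hittingBlock m H v e μ) j).coeff
            (blockPos J H j + k) := by
  have hsH : m * σ + σ ≤ H := by rw [← Nat.succ_mul]; exact hH
  have hHpos (l) : H < blockPos J H l := by
    have := le_blockPos J H l
    have := le_mul_of_fin H l
    omega
  have hg : (u + C e * X ^ σ).natDegree ≤ σ :=
    natDegree_add_le_of_degree_le (by omega) (natDegree_C_mul_X_pow_le e σ)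
  have hPg : (P.comp (u + C e * X ^ σ)).natDegree ≤ H :=
    calc _ ≤ P.natDegree * (u + C e * X ^ σ).natDegree := natDegree_comp_le
      _ ≤ (m + 1) * σ := by rw [hP.2.1]; gcongr
      _ ≤ H := hH
  exact coeff_comp_add_blockSum (hPg.trans_lt (hHpos j))
    (fun t ht => coeff_derivative_comp_of_mem_boundedMonic hP e hu (by omega) (by omega))
    (fun l => (natDegree_correctionBlock_le _ _ _ _).trans hv)
    (fun l => by have := hHpos l; omega)
    (fun l hl => by have := blockPos_add_le_of_lt (H := H) hl; omega) k

lemma X_pow_dvd_blockError_blockPos (P g : ℂ[X]) {s H J : ℕ} (hs : s ≤ H) (r : Fin J → ℂ[X])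
    (j : Fin J) : X ^ (blockPos J H j + H) ∣ blockError P g (blockPos J H) s r j := by
  have hHJ := le_mul_of_fin H j
  have hlt := blockPos_add_le J H j
  refine X_pow_dvd_blockError (N := 4 * (J * H) - s) P g r (fun l => ?_) (by omega) fun l hl => ?_
  · have := le_blockPos J H l
    omega
  · have := blockPos_add_le_of_lt (H := H) hl
    omega

theorem norm_sub_ofPolynomial_le_of_hittingVector {m D σ H J : ℕ} {u v P : ℂ[X]} {e : ℂ} {y : lpC 1}
    {R ρ κ a b δ : ℝ} {μ : Fin J → ℝ} {j : Fin J} (hP : P ∈ boundedMonic m R)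
    (he : e ≠ 0) (hu : u.natDegree ≤ D) (hv : v.natDegree ≤ D) (hσ : 2 * D < σ)
    (hH : (m + 1) * σ ≤ H) (hρ : 1 ≤ ρ) (hg : ‖ofPolynomial u‖ + ‖e‖ + κ ≤ ρ)
    (hr : ∑ l, ‖ofPolynomial (hittingBlock m H v e μ l)‖ ≤ κ) (hκ : κ ≤ 1) (ha : a ∈ Set.Icc 0 b)
    (hδ : |a - μ j| * Real.log (6 * (J * H)) ≤ δ) (hδ1 : δ ≤ 1)
    (hy : ∀ k, y k = shiftWeight a (blockPos J H j) k *
      (P.comp (hittingVector m σ H u v e μ)).coeff (blockPos J H j + k)) :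
    ‖y - ofPolynomial v‖
      ≤ 2 * δ * ‖ofPolynomial v‖ + (7 * J) ^ b * (2 * expansionBound m R ρ * κ) := by
  have hsH : m * σ + σ ≤ H := by rw [← Nat.succ_mul]; exact hH
  have hJ : (1 : ℝ) ≤ J := by exact_mod_cast j.pos
  have hpos : (blockPos J H j + 2 * H : ℝ) ≤ 6 * (J * H) := by exact_mod_cast blockPos_add_le J H j
  have herror := norm_ofPolynomial_blockError_le hP hρ
    ((add_le_add_left (norm_ofPolynomial_add_C_mul_X_pow_le u e σ) κ).trans hg)
    (blockPos J H) (m * σ) hr hκ j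
  have hhigh (k) (hk : H ≤ k) : shiftWeight a (blockPos J H j) k ≤ (7 * J) ^ b := by
    have hk : (H : ℝ) ≤ k := by exact_mod_cast hk
    exact shiftWeight_le ha.1 ha.2 (shiftRatio_le_of_add_le_mul (by linarith) (by nlinarith))
  have hlow (k) (hk : k ≤ v.natDegree) :
      |shiftWeight a (blockPos J H j) k / shiftWeight (μ j) (blockPos J H j) k - 1| ≤ 2 * δ := by
    have hkH : (k : ℝ) ≤ H := by exact_mod_cast (by omega : k ≤ H)
    have hpos1 : 1 ≤ blockPos J H j := by
      have := le_blockPos J H j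
      have := le_mul_of_fin H j
      omega
    exact abs_shiftWeight_div_sub_one_le ((shiftRatio_le_add hpos1 k).trans (by linarith)) hδ hδ1
  exact (norm_sub_ofPolynomial_le_of_eq_shift (derivLead_ne_zero m he) hy
    (coeff_comp_hittingVector hP e hu hv hσ hH μ j)
    (X_pow_dvd_blockError_blockPos _ _ (by omega) _ j) (by positivity) hhigh hlow).trans
    (by gcongr)

/-- The rate at which the errors of `hittingVector m σ H u v e μ` decrease with the tolerance used
to choose `H` and `μ`. -/
def hittingRate (m : ℕ) (R : ℝ) (u v : ℂ[X]) (e : ℂ) : ℝ :=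
  2 * ‖ofPolynomial v‖ + (1 + 2 * expansionBound m R (‖ofPolynomial u‖ + ‖e‖ + 1))
    * (‖ofPolynomial v‖ / ‖derivLead m e‖)

lemma sum_norm_ofPolynomial_hittingBlock_le_mul_hittingRate {v : ℂ[X]} {D H J m : ℕ} {R a δ : ℝ}
    {e : ℂ} {μ : Fin J → ℝ} (hR : 0 ≤ R) (u : ℂ[X]) (hv : v.natDegree ≤ D) (hH : 0 < H)
    (ha : 0 ≤ a) (hμ : ∀ l, a ≤ μ l) (hsmall : J * ((D + 1 : ℝ) / H) ^ a ≤ δ) :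
    ∑ l, ‖ofPolynomial (hittingBlock m H v e μ l)‖ ≤ δ * hittingRate m R u v e := by
  have hB : 0 ≤ expansionBound m R (‖ofPolynomial u‖ + ‖e‖ + 1) :=
    expansionBound_nonneg m hR (by positivity)
  refine (sum_norm_ofPolynomial_hittingBlock_le m e hv hH ha hμ).trans ?_
  refine mul_le_mul hsmall ?_ (by positivity) (hsmall.trans' (by positivity))
  exact (le_mul_of_one_le_left (by positivity) (by linarith)).trans
    (le_add_of_nonneg_left (by positivity))

theorem norm_sub_ofPolynomial_le_mul_hittingRate {m D σ H J : ℕ} {u v P : ℂ[X]} {e : ℂ}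
    {y : lpC 1} {R a b t δ : ℝ} {μ : Fin J → ℝ} {j : Fin J} (hP : P ∈ boundedMonic m R)
    (he : e ≠ 0) (hu : u.natDegree ≤ D) (hv : v.natDegree ≤ D) (hσ : 2 * D < σ)
    (hH : (m + 1) * σ ≤ H) (ha : 0 ≤ a) (hμ : ∀ l, a ≤ μ l) (ht : t ∈ Set.Icc a b)
    (hsmall : (7 * J : ℝ) ^ b * (J * ((D + 1 : ℝ) / H) ^ a) ≤ δ)
    (hκ : ∑ l, ‖ofPolynomial (hittingBlock m H v e μ l)‖ ≤ 1)
    (hδ : |t - μ j| * Real.log (6 * (J * H)) ≤ δ) (hδ1 : δ ≤ 1)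
    (hy : ∀ k, y k = shiftWeight t (blockPos J H j) k *
      (P.comp (hittingVector m σ H u v e μ)).coeff (blockPos J H j + k)) :
    ‖y - ofPolynomial v‖ ≤ δ * hittingRate m R u v e := by
  set B := expansionBound m R (‖ofPolynomial u‖ + ‖e‖ + 1)
  set W := ‖ofPolynomial v‖ / ‖derivLead m e‖
  have hB : 0 ≤ B := expansionBound_nonneg m ((norm_nonneg _).trans (hP.2.2 0)) (by positivity)
  have hW : 0 ≤ δ * W := mul_nonneg (hsmall.trans' (by positivity)) (by positivity)
  calc ‖y - ofPolynomial v‖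
      ≤ 2 * δ * ‖ofPolynomial v‖
          + (7 * J) ^ b * (2 * B * ∑ l, ‖ofPolynomial (hittingBlock m H v e μ l)‖) :=
        norm_sub_ofPolynomial_le_of_hittingVector hP he hu hv hσ hH
          (le_add_of_nonneg_left (by positivity)) (by gcongr) le_rfl hκ
          ⟨ha.trans ht.1, ht.2⟩ hδ hδ1 hy
    _ ≤ 2 * δ * ‖ofPolynomial v‖
          + (7 * J) ^ b * (2 * B * (J * ((D + 1 : ℝ) / H) ^ a * W)) := by
        gcongr
        exact sum_norm_ofPolynomial_hittingBlock_le m e hv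
          ((Nat.mul_pos m.succ_pos (by omega)).trans_le hH) ha hμ
    _ = 2 * δ * ‖ofPolynomial v‖
          + 2 * B * W * ((7 * J) ^ b * (J * ((D + 1 : ℝ) / H) ^ a)) := by ring
    _ ≤ 2 * δ * ‖ofPolynomial v‖ + 2 * B * W * δ := by gcongr
    _ ≤ δ * hittingRate m R u v e := by rw [hittingRate]; linarith

end HittingVector

section HittingFamily

open lpC

lemma exists_parameters (d S : ℕ) {a b D δ : ℝ} (ha : 0 < a) (hab : a ≤ b) (hD : 0 ≤ D)
    (hδ : 0 < δ) : ∃ M H : ℕ, 1 ≤ M ∧ S ≤ H ∧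
      (b - a) / M * Real.log (6 * ((M ^ d : ℕ) * H)) ≤ δ ∧
      (M ^ d : ℕ) * (D / H) ^ a ≤ δ ∧
      (7 * (M ^ d : ℕ) : ℝ) ^ b * ((M ^ d : ℕ) * (D / H) ^ a) ≤ δ := by
  obtain ⟨K, hK⟩ : ∃ K : ℕ, d * (b + 1) < K * a := by
    simpa only [div_lt_iff₀ ha] using exists_nat_gt (d * (b + 1) / a)
  have hK0 : K ≠ 0 := by
    rintro rfl
    rw [Nat.cast_zero, zero_mul] at hK
    exact hK.not_ge (mul_nonneg d.cast_nonneg (by linarith))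
  have hlog := (tendsto_div_mul_log_mul_pow (b - a) (by norm_num : (0 : ℝ) < 6)
    (d + K)).eventually_le_const hδ
  have hrpow := (tendsto_rpow_mul_pow_mul_div_rpow hD (by norm_num : (0 : ℝ) ≤ 7)
    hK).eventually_le_const hδ
  obtain ⟨M, hM, hMS, hMlog, hMrpow⟩ :=
    ((eventually_ge_atTop 1).and ((eventually_ge_atTop S).and (hlog.and hrpow))).exists
  have hM1 : (1 : ℝ) ≤ 7 * (M : ℝ) ^ d :=
    one_le_mul_of_one_le_of_one_le (by norm_num) (one_le_pow₀ (by exact_mod_cast hM))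
  refine ⟨M, M ^ K, hM, hMS.trans (Nat.le_self_pow hK0 M), ?_⟩
  push_cast
  refine ⟨by rwa [← pow_add], le_trans ?_ hMrpow, hMrpow⟩
  exact le_mul_of_one_le_left (by positivity) (Real.one_le_rpow hM1 (ha.le.trans hab))

lemma exists_tolerance {ι : Type*} [Finite ι] {ε : ℝ} (hε : 0 < ε) (c : ι → ℝ) :
    ∃ δ, 0 < δ ∧ δ ≤ 1 ∧ ∀ i, δ * c i < ε := by
  have hsmall (i) : ∀ᶠ δ in 𝓝[>] (0 : ℝ), δ * c i < ε := by
    have hcont : Tendsto (fun δ : ℝ => δ * c i) (𝓝 0) (𝓝 (0 * c i)) :=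
      (continuous_mul_const (c i)).tendsto 0
    rw [zero_mul] at hcont
    exact (hcont.eventually_lt_const hε).filter_mono nhdsWithin_le_nhds
  have hle : ∀ᶠ δ in 𝓝[>] (0 : ℝ), δ ≤ 1 :=
    (eventually_le_nhds one_pos).filter_mono nhdsWithin_le_nhds
  exact (eventually_mem_nhdsWithin.and (hle.and (eventually_all.2 hsmall))).exists

theorem exists_hitting_tuple {d : ℕ} {a b R ε : ℝ} (ha : 0 < a) (hab : a ≤ b) (m : ℕ) (hR : 0 ≤ R)
    (hε : 0 < ε) (u v : Fin d → ℂ[X]) :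
    ∃ x : Fin d → ℂ[X], (∀ i, ‖ofPolynomial (x i) - ofPolynomial (u i)‖ < ε) ∧ ∃ N : ℕ,
      ∀ lam : Fin d → ℝ, (∀ i, lam i ∈ Set.Icc a b) → ∀ P ∈ boundedMonic m R, ∃ n < N,
        ∀ (i : Fin d) (y : lpC 1),
          (∀ k, y k = shiftWeight (lam i) (n + 1) k * (P.comp (x i)).coeff (n + 1 + k)) →
            ‖y - ofPolynomial (v i)‖ < ε := by
  obtain ⟨D, hD⟩ : ∃ D, ∀ i, (u i).natDegree ≤ D ∧ (v i).natDegree ≤ D :=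
    ⟨_, fun i => max_le_iff.1 (le_sup (f := fun i => max (u i).natDegree (v i).natDegree)
      (mem_univ i))⟩
  obtain ⟨e, he⟩ : ∃ e : ℂ, ‖e‖ = ε / 2 := ⟨(ε / 2 : ℝ), by simp [abs_of_pos hε]⟩
  obtain ⟨δ, hδ0, hδ1, hδ⟩ := exists_tolerance (show 0 < min 1 (ε / 2) by positivity)
    fun i => hittingRate m R (u i) (v i) e
  obtain ⟨M, H, hM, hH, hlog, hE, hsmall⟩ := exists_parameters d ((m + 1) * (2 * D + 1)) ha hab
    (show (0 : ℝ) ≤ D + 1 by positivity) hδ0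
  have hH0 : 0 < H := (Nat.mul_pos m.succ_pos (2 * D).succ_pos).trans_le hH
  obtain ⟨μ, hμ, hnet⟩ := exists_finite_net d hab hM
  have hκ (i) := (sum_norm_ofPolynomial_hittingBlock_le_mul_hittingRate (m := m) (e := e) hR (u i)
    (hD i).2 hH0 ha.le (hμ · i) hE).trans_lt (hδ i)
  refine ⟨fun i => hittingVector m (2 * D + 1) H (u i) (v i) e (μ · i), fun i => ?_,
    6 * (M ^ d * H), fun lam hlam P hP => ?_⟩
  · refine (norm_ofPolynomial_hittingVector_sub_le _ _ _ _ _ _ _).trans_lt ?_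
    linarith [(hκ i).trans_le (min_le_right _ _)]
  · obtain ⟨l, hl⟩ := hnet lam hlam
    have hJH := le_mul_of_fin H l
    have hlt := blockPos_add_le (M ^ d) H l
    obtain ⟨n, hn⟩ : ∃ n, blockPos (M ^ d) H l = n + 1 :=
      Nat.exists_eq_add_one_of_ne_zero (by have := le_blockPos (M ^ d) H l; omega)
    have hlog0 : 0 ≤ Real.log (6 * ((M ^ d : ℕ) * H)) := by
      exact_mod_cast Real.log_natCast_nonneg (6 * (M ^ d * H))
    refine ⟨n, by omega, fun i y hy => (norm_sub_ofPolynomial_le_mul_hittingRate hP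
      (norm_pos_iff.1 (he ▸ half_pos hε)) (hD i).1 (hD i).2 (by omega) hH ha.le (hμ · i) (hlam i)
      hsmall ((hκ i).le.trans (min_le_left _ _)) (j := l)
      ((mul_le_mul_of_nonneg_right (hl i) hlog0).trans hlog) hδ1 (by rwa [hn])).trans_lt ?_⟩
    linarith [(hδ i).trans_le (min_le_right _ _)]

end HittingFamily

section Family

open lpC

lemma equicontinuous_apply_aeval {E κ : Type*} [NormedCommRing E] [NormedAlgebra ℂ E]
    {L : κ → E →L[ℂ] E} {P : κ → ℂ[X]} {m : ℕ} {C R : ℝ} (hL : ∀ θ, ‖L θ‖ ≤ C)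
    (hP : ∀ θ, P θ ∈ boundedMonic m R) :
    Equicontinuous fun θ x => L θ (aeval x (P θ)) := by
  intro x
  refine Metric.equicontinuousAt_of_continuity_modulus
    (fun y => C * ∑ p ∈ range (m + 2), R * ‖x ^ p - y ^ p‖) ?_ _ (.of_forall fun y θ => ?_)
  · have hcont : Continuous fun y => C * ∑ p ∈ range (m + 2), R * ‖x ^ p - y ^ p‖ := by fun_prop
    simpa using hcont.tendsto x
  · rw [dist_eq_norm, ← map_sub, aeval_eq_sum_of_mem_boundedMonic (hP θ),
      aeval_eq_sum_of_mem_boundedMonic (hP θ), ← sum_sub_distrib]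
    refine (L θ).le_of_opNorm_le_of_le (hL θ) (norm_sum_le_of_le _ fun p _ => ?_)
    rw [← smul_sub]
    exact (norm_smul_le _ _).trans (by gcongr; exact (hP θ).2.2 p)

/-- The parameters `(lam, P)` for which one vector `x` can be handled uniformly: the `lam i` stay
away from `0` and `∞`, and `P` has degree `m + 1` and bounded coefficients. -/
def parameterBox (d m k : ℕ) : Set ((Fin d → ℝ) × ℂ[X]) :=
  {θ | (∀ i, θ.1 i ∈ Set.Icc ((k + 1 : ℝ)⁻¹) (k + 1)) ∧ θ.2 ∈ boundedMonic m k}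

lemma exists_mem_parameterBox {d : ℕ} {lam : Fin d → ℝ} (hlam : ∀ i, 0 < lam i) {P : ℂ[X]}
    (hP : P.Monic) (hdeg : 0 < P.natDegree) : ∃ m k, (lam, P) ∈ parameterBox d m k := by
  obtain ⟨m, hm⟩ := Nat.exists_eq_add_one_of_ne_zero hdeg.ne'
  have hbig (c : ℝ) : ∀ᶠ k : ℕ in atTop, c ≤ k := tendsto_natCast_atTop_atTop.eventually_ge_atTop c
  obtain ⟨k, hk, hsum⟩ := ((eventually_all.2 fun i => (hbig (lam i)).and (hbig (lam i)⁻¹)).and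
    (hbig (∑ p ∈ P.support, ‖P.coeff p‖))).exists
  refine ⟨m, k, fun i => ⟨?_, ?_⟩, hP, hm, fun p => ?_⟩
  · exact inv_le_of_inv_le₀ (hlam i) ((hk i).2.trans (lt_add_one _).le)
  · exact (hk i).1.trans (lt_add_one _).le
  · by_cases hp : p ∈ P.support
    · exact (single_le_sum (fun q _ => norm_nonneg (P.coeff q)) hp).trans hsum
    · rw [notMem_support_iff.1 hp, norm_zero]
      exact k.cast_nonneg

lemma denseRange_ofPolynomial_tuple (d : ℕ) :
    DenseRange fun (u : Fin d → ℂ[X]) i => ofPolynomial (u i) :=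
  DenseRange.piMap fun _ => denseRange_ofPolynomial

variable {d : ℕ} {T : (Fin d → ℝ) → ((Fin d → lpC 1) →L[ℂ] (Fin d → lpC 1))}

lemma dense_uniformlyHitting_parameterBox
    (hT : ∀ lam : Fin d → ℝ, (∀ i, 0 < lam i) → IsProductShift 1 d wPow (T lam) lam) (m k : ℕ)
    (v : Fin d → ℂ[X]) {ε : ℝ} (hε : 0 < ε) :
    Dense (uniformlyHitting (fun θ n x => ((T θ.1) ^ (n + 1)) (aeval x θ.2)) (parameterBox d m k)
      (fun i => ofPolynomial (v i)) ε) := by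
  refine Dense.of_closure ((denseRange_ofPolynomial_tuple d).mono ?_)
  rintro _ ⟨u, rfl⟩
  refine Metric.mem_closure_iff.2 fun r hr => ?_
  have hk : (1 : ℝ) ≤ k + 1 := le_add_of_nonneg_left k.cast_nonneg
  obtain ⟨x, hxu, N, hN⟩ := exists_hitting_tuple (inv_pos.2 (one_pos.trans_le hk))
    ((inv_le_one_of_one_le₀ hk).trans hk) m k.cast_nonneg (lt_min hr hε) u v
  refine ⟨fun i => ofPolynomial (x i), ⟨N, fun θ hθ => ?_⟩, ?_⟩
  · obtain ⟨n, hn, hhit⟩ := hN θ.1 hθ.1 θ.2 hθ.2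
    have hpos (i) : 0 < θ.1 i := (inv_pos.2 (one_pos.trans_le hk)).trans_le (hθ.1 i).1
    refine ⟨n, hn, (dist_eq_norm _ _).trans_lt ?_⟩
    refine (pi_norm_lt_iff hε).2 fun i => (hhit i _ fun t => ?_).trans_le (min_le_right _ _)
    rw [(hT θ.1 hpos).pow_apply_eq_shiftWeight, aeval_pi_apply₂, ← ofPolynomial_comp,
      ofPolynomial_apply]
  · rw [dist_comm, dist_eq_norm, pi_norm_lt_iff hr]
    exact fun i => (hxu i).trans_le (min_le_left _ _)

theorem exists_forall_denseRange_pow_aeval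
    (hT : ∀ lam : Fin d → ℝ, (∀ i, 0 < lam i) → IsProductShift 1 d wPow (T lam) lam) :
    ∃ x : Fin d → lpC 1, ∀ lam : Fin d → ℝ, (∀ i, 0 < lam i) → ∀ P : ℂ[X], P.Monic →
      0 < P.natDegree → DenseRange fun n => ((T lam) ^ (n + 1)) (aeval x P) := by
  have hequi (mk : ℕ × ℕ) (n : ℕ) : Equicontinuous fun (θ : parameterBox d mk.1 mk.2)
      (x : Fin d → lpC 1) => ((T θ.1.1) ^ (n + 1)) (aeval x θ.1.2) := by
    refine equicontinuous_apply_aeval (C := (2 ^ (mk.2 + 1 : ℝ)) ^ (n + 1)) (fun θ => ?_)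
      fun θ => θ.2.2
    have hpos : (0 : ℝ) < (mk.2 + 1 : ℝ)⁻¹ := by positivity
    refine (norm_pow_le' _ n.succ_pos).trans (pow_le_pow_left₀ (norm_nonneg _) ?_ _)
    exact (hT _ fun i => hpos.trans_le (θ.2.1 i).1).norm_le fun i =>
      ⟨hpos.le.trans (θ.2.1 i).1, (θ.2.1 i).2⟩
  obtain ⟨x, hx⟩ := exists_forall_denseRange_of_dense_uniformlyHitting
    (K := fun mk : ℕ × ℕ => parameterBox d mk.1 mk.2) hequi (denseRange_ofPolynomial_tuple d) (by
      rintro mk _ ⟨v, rfl⟩ ε hε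
      exact dense_uniformlyHitting_parameterBox hT mk.1 mk.2 v hε)
  refine ⟨x, fun lam hlam P hP hdeg => ?_⟩
  obtain ⟨m, k, hmk⟩ := exists_mem_parameterBox hlam hP hdeg
  exact hx (m, k) (lam, P) hmk

lemma denseRange_pow_aeval_of_monic {E : Type*} [NormedCommRing E] [NormedAlgebra ℂ E] {x : E}
    {L : E →L[ℂ] E}
    (hx : ∀ P : ℂ[X], P.Monic → 0 < P.natDegree → DenseRange fun n => (L ^ (n + 1)) (aeval x P))
    {P : ℂ[X]} (hP : 0 < P.natDegree) : DenseRange fun n => (L ^ (n + 1)) (aeval x P) := by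
  have hlead : P.leadingCoeff ≠ 0 := leadingCoeff_ne_zero.2 (ne_zero_of_natDegree_gt hP)
  have hmonic := hx _ (monic_mul_leadingCoeff_inv (leadingCoeff_ne_zero.1 hlead))
    (by rwa [natDegree_mul_leadingCoeff_inv _ (leadingCoeff_ne_zero.1 hlead)])
  have hsmul := (Homeomorph.smulOfNeZero P.leadingCoeff hlead).surjective.denseRange.comp hmonic
    (Homeomorph.smulOfNeZero P.leadingCoeff hlead).continuous
  convert hsmul using 2 with n
  rw [Function.comp_apply, Homeomorph.smulOfNeZero_apply]
  beta_reduce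
  rw [← map_smul, ← map_smul, mul_comm, ← smul_eq_C_mul, smul_inv_smul₀ hlead]

theorem commonHypercyclicAlgebraConv_of_forall_monic [NeZero d] {S : Set (Fin d → ℝ)}
    (hS : S.Nonempty) {x : Fin d → lpC 1} (hx : ∀ lam ∈ S, ∀ P : ℂ[X], P.Monic → 0 < P.natDegree →
      DenseRange fun n => ((T lam) ^ (n + 1)) (aeval x P)) :
    CommonHypercyclicAlgebraConv d S T := by
  refine ⟨{y | ∃ P : ℂ[X], P.coeff 0 = 0 ∧ aeval x P = y}, ⟨0, coeff_zero 0, map_zero _⟩, ?_, ?_,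
    ?_, ⟨x, ⟨X, coeff_X_zero, aeval_X x⟩, ?_⟩, ?_⟩
  · rintro _ ⟨P, hP, rfl⟩ _ ⟨Q, hQ, rfl⟩
    exact ⟨P + Q, by rw [coeff_add, hP, hQ, add_zero], map_add _ _ _⟩
  · rintro c _ ⟨P, hP, rfl⟩
    exact ⟨c • P, by rw [coeff_smul, hP, smul_zero], map_smul _ _ _⟩
  · rintro _ ⟨P, hP, rfl⟩ _ ⟨Q, -, rfl⟩
    refine ⟨_, ⟨P * Q, by rw [mul_coeff_zero, hP, zero_mul], rfl⟩, fun i n => ?_⟩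
    rw [map_mul, Pi.mul_apply, lpC.mul_apply]
  · rintro rfl
    obtain ⟨lam, hlam⟩ := hS
    have horbit := hx lam hlam X monic_X (by rw [natDegree_X]; exact one_pos)
    simp only [aeval_X, map_zero] at horbit
    have : Nontrivial (lpC 1) := NormOneClass.nontrivial
    obtain ⟨y, hy⟩ := exists_ne (0 : Fin d → lpC 1)
    have hy0 := horbit y
    rw [Set.range_const, closure_singleton] at hy0
    exact hy hy0
  · rintro _ ⟨P, hP, rfl⟩ hne lam hlam
    refine denseRange_pow_aeval_of_monic (hx lam hlam) (Nat.pos_of_ne_zero fun hdeg => hne ?_)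
    rw [eq_C_of_natDegree_eq_zero hdeg, hP, map_zero, map_zero]

end Family

/-- Theorem 1.4 of the paper, for `w 1 (a) ⋯ w n (a) = n ^ a`. -/
theorem stmt_4 (d : ℕ) (hd : 1 ≤ d)
    (T : (Fin d → ℝ) → ((Fin d → lpC 1) →L[ℂ] (Fin d → lpC 1)))
    (hT : ∀ lam : Fin d → ℝ, (∀ i, 0 < lam i) → IsProductShift 1 d wPow (T lam) lam) :
    CommonHypercyclicAlgebraConv d {lam | ∀ i, 0 < lam i} T := by
  have : NeZero d := ⟨Nat.one_le_iff_ne_zero.1 hd⟩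
  obtain ⟨x, hx⟩ := exists_forall_denseRange_pow_aeval hT
  exact commonHypercyclicAlgebraConv_of_forall_monic ⟨1, fun _ => one_pos⟩ hx
end
end

section
/- Fix α ∈ (0, 1/2) and β > 2α. Then there exists a constant c > 0 such that for every D > 0, every compact square K ⊂ ℝ² whose diameter (in the sup-norm) is at most cD, every τ > 0, every η > 0 and every integer N ≥ 1, there exist an integer q ≥ 1, integers n_0 < n_1 < ⋯ < n_{q−1}, points λ_0, …, λ_{q−1} ∈ ℝ² with λ_j = (x_j, y_j), and compact squares Λ_0, …, Λ_{q−1} ⊂ ℝ² such that: (a) n_0 ≥ N and n_{j+1} − n_j ≥ N for all 0 ≤ j ≤ q−2; (b) K = ∪_{j=0}^{q−1} Λ_j and Λ_j ⊆ [x_j, x_j + τ/n_j^α] × [y_j, y_j + τ/n_j^α] for every j; (c) for all 0 ≤ j < l ≤ q−1, all λ ∈ Λ_j and all μ ∈ Λ_l, ‖λ − μ‖_∞ ≤ D·(n_l − n_j)^α/n_l^α; (d) Σ_{j=0}^{q−1} 1/n_j^β ≤ η; (e) for every j ∈ {0,…,q−1}, Σ_{l≠j} 1/|n_l − n_j|^β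 ≤ η. -/
open Finset

noncomputable section

/-! Cut the square into `P ^ m × P ^ m` cells and run through them along the Z-order curve: cell
number `i` has as its coordinates the base-`P` digits of `i` in even and in odd positions. Cells
whose numbers agree above the last `k` digits in base `B = P ^ 2` lie within `P ^ k` side lengths
of each other, but consecutive cells may be far apart, so equally spaced times would not do.
Instead the time of cell `i` is `d` times the number obtained by reading the base-`B` digits of `i`
in a base `R ≥ 2 * B`; like the points of a Cantor set, the times of cells whose numbers first
differ at digit `k` are then at least `d * R ^ k / 2` apart. The choice `R ^ α < P` makes (c)
scale-invariant and lets the cells shrink faster than the times to the power `-α`, while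
`P ^ 2 < R ^ β` makes the sums in (d) and (e) converge uniformly in `m`. Both are possible with
`R ≥ 2 * P ^ 2` because `2 * α < min 1 β`. Numbering the cells from `B ^ m` to `2 * B ^ m - 1`
makes (d) the instance of (e) that compares with cell `0`. -/

theorem exists_mul_pow_le_mul_pow {a b ε : ℝ} (ha : 0 ≤ a) (hab : a < b) (hε : 0 < ε) (C : ℝ) :
    ∃ m : ℕ, C * a ^ m ≤ ε * b ^ m := by
  obtain ⟨m, hm⟩ := (((isLittleO_pow_pow_of_lt_left ha hab).const_mul_left C).def hε).exists
  rw [Real.norm_eq_abs, Real.norm_of_nonneg (pow_nonneg (ha.trans hab.le) m)] at hm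
  exact ⟨m, (le_abs_self _).trans hm⟩

theorem Icc_add_mul_eq_biUnion {n : ℕ} {t : ℝ} (hn : 1 ≤ n) (ht : 0 ≤ t) (u : ℝ) :
    Set.Icc u (u + n * t) = ⋃ a ∈ range n, Set.Icc (u + a * t) (u + a * t + t) := by
  induction n, hn using Nat.le_induction with
  | base => simp
  | succ n hn ih =>
    have hnt : 0 ≤ n * t := by positivity
    rw [range_add_one, set_biUnion_insert, ← ih, Set.union_comm,
      Set.Icc_union_Icc_eq_Icc (by linarith) (by linarith)]
    push_cast
    ring_nf

theorem abs_sub_le_of_mem_Icc {w t a b p q : ℝ} (hp : p ∈ Set.Icc (w + a * t) (w + a * t + t))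
    (hq : q ∈ Set.Icc (w + b * t) (w + b * t + t)) : |p - q| ≤ (|a - b| + 1) * t := by
  obtain ⟨hp₀, hp₁⟩ := hp
  obtain ⟨hq₀, hq₁⟩ := hq
  have ht : 0 ≤ t := by linarith
  have := mul_le_mul_of_nonneg_right (le_abs_self (a - b)) ht
  have := mul_le_mul_of_nonneg_right (neg_abs_le (a - b)) ht
  rw [abs_le]
  constructor <;> linarith

theorem exists_grid_parameters {α β : ℝ} (hα₀ : 0 ≤ α) (hα : α < 1 / 2) (hβ : 2 * α < β) :
    ∃ P R : ℕ, 1 < P ∧ 2 * P ^ 2 ≤ R ∧ (R : ℝ) ^ α < P ∧ ((P ^ 2 : ℕ) : ℝ) < (R : ℝ) ^ β := by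
  obtain ⟨q, hαq, hq⟩ :=
    exists_rat_btwn (show α < min (1 / 2) (β / 2) from lt_min hα (by linarith))
  lift q to ℚ≥0 using mod_cast hα₀.trans hαq.le
  have hden : (0 : ℝ) < q.den := mod_cast q.den_pos
  have hqdiv : ((q : ℚ) : ℝ) = q.num / q.den := by
    conv_lhs => rw [← q.num_div_den]
    push_cast
    rfl
  rw [hqdiv, lt_div_iff₀ hden] at hαq
  rw [hqdiv, lt_min_iff, div_lt_iff₀ hden, div_lt_iff₀ hden] at hq
  have hnum : 2 * q.num < q.den := by
    have : 2 * (q.num : ℝ) < q.den := by linarith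
    exact_mod_cast this
  have hpow (x : ℝ) : (((2 ^ q.den : ℕ) : ℝ)) ^ x = (2 : ℝ) ^ (x * q.den) := by
    rw [Nat.cast_pow, ← Real.rpow_natCast, ← Real.rpow_mul (by norm_num), mul_comm, Nat.cast_ofNat]
  refine ⟨2 ^ q.num, 2 ^ q.den, Nat.one_lt_two_pow ?_, ?_, ?_, ?_⟩
  · intro h
    have : 0 ≤ α * q.den := by positivity
    rw [h, Nat.cast_zero] at hαq
    linarith
  · rw [← pow_mul, ← pow_succ']
    exact Nat.pow_le_pow_right two_pos (by omega)
  · rw [hpow, Nat.cast_pow, ← Real.rpow_natCast, Nat.cast_ofNat]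
    exact Real.rpow_lt_rpow_of_exponent_lt one_lt_two hαq
  · rw [hpow, ← pow_mul, Nat.cast_pow, ← Real.rpow_natCast, Nat.cast_ofNat]
    refine Real.rpow_lt_rpow_of_exponent_lt one_lt_two ?_
    push_cast
    linarith

theorem exists_div_pow_lt_and_div_pow_succ_eq {B i l : ℕ} (hB : 1 < B) (hil : i < l) :
    ∃ k, i / B ^ k < l / B ^ k ∧ i / B ^ (k + 1) = l / B ^ (k + 1) := by
  have hmerge : ∃ k, i / B ^ k = l / B ^ k := by
    have hl : l < B ^ l := Nat.lt_pow_self hB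
    exact ⟨l, by rw [Nat.div_eq_of_lt (hil.trans hl), Nat.div_eq_of_lt hl]⟩
  obtain ⟨k, hk⟩ : ∃ k, Nat.find hmerge = k + 1 :=
    Nat.exists_eq_succ_of_ne_zero fun h ↦ hil.ne (by simpa [h] using Nat.find_spec hmerge)
  exact ⟨k, (Nat.div_le_div_right hil.le).lt_of_ne (Nat.find_min hmerge (by omega)),
    hk ▸ Nat.find_spec hmerge⟩

/-- The base-`B` digits of `i` read in base `R`, so that for `R` larger than `B` the values form a
Cantor-like set with gaps between blocks. Meaningful for `1 < B` only: the digits of `i` in base `1`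
are `i` ones, and in base `0` the single digit `i`. -/
def spread (B R i : ℕ) : ℕ :=
  Nat.ofDigits R (Nat.digits B i)

section Spread

variable {B R : ℕ}

@[simp]
theorem spread_zero : spread B R 0 = 0 := by
  simp [spread]

theorem spread_eq (hB : 1 < B) (i : ℕ) : spread B R i = i % B + R * spread B R (i / B) := by
  rcases i.eq_zero_or_pos with rfl | hi
  · simp
  · rw [spread, Nat.digits_def' hB hi, Nat.ofDigits_cons, ← spread]

theorem spread_strictMono (hB : 1 < B) (hBR : B ≤ R) : StrictMono (spread B R) := by
  intro i l hil
  induction l using Nat.strong_induction_on generalizing i with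
  | _ l ih =>
    rw [spread_eq hB i, spread_eq hB l]
    have hi := Nat.div_add_mod i B
    have hl := Nat.div_add_mod l B
    have himod := Nat.mod_lt i (zero_lt_one.trans hB)
    rcases (Nat.div_le_div_right (c := B) hil.le).eq_or_lt with heq | hlt
    · rw [heq] at hi ⊢
      omega
    · have := Nat.mul_le_mul_left R (ih (l / B) (Nat.div_lt_self (by omega) hB) hlt)
      rw [Nat.succ_eq_add_one, mul_add_one] at this
      omega

theorem spread_gap (hB : 1 < B) (hBR : 2 * B ≤ R) {k i l : ℕ} (h : i / B ^ k < l / B ^ k) :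
    2 * spread B R i + R ^ k + 1 ≤ 2 * spread B R l := by
  induction k generalizing i l with
  | zero =>
    have := spread_strictMono hB (by omega : B ≤ R) (by simpa using h)
    rw [pow_zero]
    omega
  | succ k ih =>
    rw [pow_succ', ← Nat.div_div_eq_div_mul, ← Nat.div_div_eq_div_mul] at h
    have hmod := Nat.mod_lt i (zero_lt_one.trans hB)
    rw [spread_eq hB i, spread_eq hB l, pow_succ']
    linarith [Nat.mul_le_mul_left R (ih h), (l % B).zero_le]

theorem spread_lt_pow (hB : 1 < B) (hBR : B ≤ R) {m i : ℕ} (hi : i < B ^ m) :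
    spread B R i < R ^ m := by
  induction m generalizing i with
  | zero => simp_all
  | succ m ih =>
    have hdiv := ih (Nat.div_lt_of_lt_mul (pow_succ' B m ▸ hi))
    have hmod := Nat.mod_lt i (zero_lt_one.trans hB)
    rw [spread_eq hB i, pow_succ']
    nlinarith

theorem abs_sub_rpow_le_spread_sub_rpow {β p : ℝ} (hB : 1 < B) (hBR : 2 * B ≤ R) (hβ : 0 ≤ β)
    (hp : 0 ≤ p) (hpβ : (B : ℝ) ^ p ≤ (R : ℝ) ^ β) {i l : ℕ} (hil : i ≠ l) :
    |(l : ℝ) - i| ^ p ≤ (2 * R * |(spread B R l : ℝ) - spread B R i|) ^ β := by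
  wlog hlt : i < l generalizing i l
  · rw [abs_sub_comm (l : ℝ), abs_sub_comm (spread B R l : ℝ)]
    exact this hil.symm (hil.symm.lt_of_le (not_lt.1 hlt))
  obtain ⟨k, hk, hk'⟩ := exists_div_pow_lt_and_div_pow_succ_eq hB hlt
  have hclose : |(l : ℝ) - i| ≤ (B : ℝ) ^ (k + 1) := by
    have hi := Nat.mul_div_le i (B ^ (k + 1))
    have hl := Nat.lt_mul_div_succ l (pow_pos (zero_lt_one.trans hB) (k + 1))
    have hle : l ≤ i + B ^ (k + 1) := by
      rw [mul_add_one, ← hk'] at hl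
      omega
    have hle' : (l : ℝ) ≤ i + (B : ℝ) ^ (k + 1) := mod_cast hle
    have hlt' : (i : ℝ) < l := mod_cast hlt
    rw [abs_of_pos (sub_pos.2 hlt')]
    linarith
  have hfar : (R : ℝ) ^ k ≤ 2 * |(spread B R l : ℝ) - spread B R i| := by
    have hgap : 2 * (spread B R i : ℝ) + (R : ℝ) ^ k + 1 ≤ 2 * spread B R l :=
      mod_cast spread_gap hB hBR hk
    linarith [le_abs_self ((spread B R l : ℝ) - spread B R i)]
  calc |(l : ℝ) - i| ^ p ≤ ((B : ℝ) ^ (k + 1)) ^ p := by gcongr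
    _ = ((B : ℝ) ^ p) ^ (k + 1) := (Real.rpow_pow_comm B.cast_nonneg p (k + 1)).symm
    _ ≤ ((R : ℝ) ^ β) ^ (k + 1) := by gcongr
    _ = (R * (R : ℝ) ^ k) ^ β := by rw [Real.rpow_pow_comm R.cast_nonneg, pow_succ']
    _ ≤ (R * (2 * |(spread B R l : ℝ) - spread B R i|)) ^ β := by gcongr
    _ = _ := by ring_nf

theorem exists_sum_one_div_spread_sub_rpow_le {β : ℝ} (hB : 1 < B) (hBR : 2 * B ≤ R) (hβ : 0 ≤ β)
    (hBβ : (B : ℝ) < (R : ℝ) ^ β) :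
    ∃ C : ℝ, ∀ (i : ℕ) (F : Finset ℕ), i ∉ F →
      ∑ l ∈ F, 1 / |(spread B R l : ℝ) - spread B R i| ^ β ≤ C := by
  have hB' : (1 : ℝ) < B := mod_cast hB
  have hBβ₀ : 0 < (R : ℝ) ^ β := by linarith
  set p : ℝ := Real.logb B ((R : ℝ) ^ β)
  have hp : 1 < p := by rwa [Real.lt_logb_iff_rpow_lt hB' hBβ₀, Real.rpow_one]
  have hpβ : (B : ℝ) ^ p = (R : ℝ) ^ β := Real.rpow_logb (by linarith) hB'.ne' hBβ₀
  refine ⟨(2 * R) ^ β * ∑' z : ℤ, |(z : ℝ)| ^ (-p), fun i F hi ↦ ?_⟩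
  have hterm : ∀ l ∈ F, 1 / |(spread B R l : ℝ) - spread B R i| ^ β ≤
      (2 * R) ^ β * |((l - i : ℤ) : ℝ)| ^ (-p) := by
    intro l hl
    have hil : i ≠ l := fun h ↦ hi (h ▸ hl)
    have hle := abs_sub_rpow_le_spread_sub_rpow hB hBR hβ (by linarith) hpβ.le hil
    have hS : 0 < |(spread B R l : ℝ) - spread B R i| := abs_pos.2 <| sub_ne_zero.2 <| mod_cast
      (spread_strictMono hB (by omega : B ≤ R)).injective.ne hil.symm
    have hl' : 0 < |(l : ℝ) - i| := abs_pos.2 <| sub_ne_zero.2 <| mod_cast hil.symm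
    rw [Real.mul_rpow (by positivity) hS.le] at hle
    push_cast
    rw [Real.rpow_neg hl'.le, ← div_eq_mul_inv, div_le_div_iff₀ (by positivity) (by positivity),
      one_mul]
    exact hle
  calc _ ≤ ∑ l ∈ F, (2 * R) ^ β * |((l - i : ℤ) : ℝ)| ^ (-p) := sum_le_sum hterm
    _ = (2 * R) ^ β * ∑ z ∈ F.image fun l : ℕ ↦ (l - i : ℤ), |(z : ℝ)| ^ (-p) := by
      rw [← mul_sum, sum_image fun a _ b _ h ↦ by simpa using h]
    _ ≤ _ := by
      gcongr
      exact (Real.summable_abs_int_rpow hp).sum_le_tsum _ fun z _ ↦ by positivity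

theorem exists_scale_sum_one_div_spread_sub_rpow_le {β η : ℝ} (hB : 1 < B) (hBR : 2 * B ≤ R)
    (hβ : 0 < β) (hBβ : (B : ℝ) < (R : ℝ) ^ β) (hη : 0 < η) (N : ℕ) :
    ∃ d : ℕ, N ≤ d ∧ 0 < d ∧ ∀ (i : ℕ) (F : Finset ℕ), i ∉ F →
      ∑ l ∈ F, 1 / |((d * spread B R l : ℕ) : ℝ) - (d * spread B R i : ℕ)| ^ β ≤ η := by
  obtain ⟨C, hC⟩ := exists_sum_one_div_spread_sub_rpow_le hB hBR hβ.le hBβ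
  have htendsto := (tendsto_rpow_atTop hβ).comp tendsto_natCast_atTop_atTop
  obtain ⟨d, hd, hNd, hd₀⟩ := ((htendsto.eventually_ge_atTop (C / η)).and
    ((Filter.eventually_ge_atTop N).and (Filter.eventually_gt_atTop 0))).exists
  have hdβ : 0 < (d : ℝ) ^ β := by positivity
  refine ⟨d, hNd, hd₀, fun i F hi ↦ ?_⟩
  have hterm (l : ℕ) : 1 / |((d * spread B R l : ℕ) : ℝ) - (d * spread B R i : ℕ)| ^ β =
      1 / |(spread B R l : ℝ) - spread B R i| ^ β / (d : ℝ) ^ β := by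
    push_cast
    rw [← mul_sub, abs_mul, Nat.abs_cast, Real.mul_rpow d.cast_nonneg (abs_nonneg _), div_div,
      mul_comm]
  rw [sum_congr rfl fun l _ ↦ hterm l, ← sum_div, div_le_iff₀ hdβ]
  exact (hC i F hi).trans ((div_le_iff₀' hη).1 hd)

theorem pow_le_pow_mul_spread_ratio_rpow {α : ℝ} {P : ℕ} (hB : 1 < B) (hBR : 2 * B ≤ R)
    (hα : 0 ≤ α) (hRα : (R : ℝ) ^ α ≤ P) {k m i l : ℕ} (h : i / B ^ k < l / B ^ k)
    (hl : l < B ^ (m + 1)) :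
    (P : ℝ) ^ k ≤
      P ^ m * ((2 * R) ^ α * (((spread B R l : ℝ) - spread B R i) / spread B R l) ^ α) := by
  have hR : (0 : ℝ) < R := by norm_cast; omega
  have hP : (0 : ℝ) < P := (by positivity : 0 < (R : ℝ) ^ α).trans_le hRα
  obtain ⟨e, rfl⟩ : ∃ e, m = k + e := by
    have hkl : B ^ k ≤ l := (Nat.div_pos_iff.1 (Nat.zero_lt_of_lt h)).2
    have := (Nat.pow_lt_pow_iff_right hB).1 (hkl.trans_lt hl)
    exact Nat.exists_eq_add_of_le (by omega)
  have hgap : 2 * (spread B R i : ℝ) + (R : ℝ) ^ k + 1 ≤ 2 * spread B R l :=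
    mod_cast spread_gap hB hBR h
  have hSl : (spread B R l : ℝ) ≤ (R : ℝ) ^ (k + e + 1) :=
    mod_cast (spread_lt_pow hB (by omega : B ≤ R) hl).le
  have hRk : 0 < (R : ℝ) ^ k := by positivity
  have hdiff : 0 < (spread B R l : ℝ) - spread B R i := by linarith
  have hSl₀ : (0 : ℝ) < spread B R l := by linarith [(spread B R i).cast_nonneg (α := ℝ)]
  have hratio : 1 / (R : ℝ) ^ e ≤
      2 * R * (((spread B R l : ℝ) - spread B R i) / spread B R l) := by
    rw [← mul_div_assoc, div_le_div_iff₀ (by positivity) hSl₀, one_mul]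
    calc (spread B R l : ℝ) ≤ R * R ^ k * R ^ e := hSl.trans_eq (by ring)
      _ ≤ R * (2 * ((spread B R l : ℝ) - spread B R i)) * R ^ e := by gcongr; linarith
      _ = _ := by ring
  calc (P : ℝ) ^ k = P ^ (k + e) * (1 / P ^ e) := by rw [pow_add]; field_simp
    _ ≤ P ^ (k + e) * (1 / ((R : ℝ) ^ α) ^ e) := by gcongr
    _ = P ^ (k + e) * (1 / (R : ℝ) ^ e) ^ α := by
      rw [Real.div_rpow zero_le_one (by positivity), Real.one_rpow, Real.rpow_pow_comm hR.le]
    _ ≤ P ^ (k + e) * (2 * R * (((spread B R l : ℝ) - spread B R i) / spread B R l)) ^ α := by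
      gcongr
    _ = _ := by
      rw [Real.mul_rpow (by positivity) (by positivity)]

end Spread

section CellTime

variable {B R : ℕ}

/-- The time `n_j` at which cell `B ^ m + j` is visited, when times are measured in units of `d`. -/
def cellTime (B R d m j : ℕ) : ℕ :=
  d * spread B R (B ^ m + j)

theorem pow_add_lt_pow_succ (hB : 1 < B) {m j : ℕ} (hj : j < B ^ m) : B ^ m + j < B ^ (m + 1) := by
  have := Nat.mul_le_mul_right (B ^ m) (Nat.succ_le_of_lt hB)
  rw [pow_succ']
  omega

theorem le_cellTime (hB : 1 < B) (hBR : B ≤ R) (d m j : ℕ) : d ≤ cellTime B R d m j := by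
  have hpos : 0 < B ^ m + j := by positivity
  exact Nat.le_mul_of_pos_right d ((Nat.zero_le _).trans_lt (spread_strictMono hB hBR hpos))

theorem cellTime_add_le_cellTime_succ (hB : 1 < B) (hBR : B ≤ R) (d m j : ℕ) :
    cellTime B R d m j + d ≤ cellTime B R d m (j + 1) :=
  Nat.mul_le_mul_left d (spread_strictMono hB hBR (Nat.lt_add_one (B ^ m + j)))

theorem exists_scale_sum_one_div_cellTime_rpow_le {β η : ℝ} (hB : 1 < B) (hBR : 2 * B ≤ R)
    (hβ : 0 < β) (hBβ : (B : ℝ) < (R : ℝ) ^ β) (hη : 0 < η) (N : ℕ) :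
    ∃ d : ℕ, N ≤ d ∧ 0 < d ∧ ∀ m : ℕ,
      ∑ j ∈ range (B ^ m), 1 / (cellTime B R d m j : ℝ) ^ β ≤ η ∧
      ∀ j, ∑ l ∈ (range (B ^ m)).erase j,
        1 / |(cellTime B R d m l : ℝ) - cellTime B R d m j| ^ β ≤ η := by
  obtain ⟨d, hNd, hd, hsum⟩ := exists_scale_sum_one_div_spread_sub_rpow_le hB hBR hβ hBβ hη N
  refine ⟨d, hNd, hd, fun m ↦ ⟨?_, fun j ↦ ?_⟩⟩
  · have hcell₀ := hsum 0 ((range (B ^ m)).map (addLeftEmbedding (B ^ m))) (by simp; omega)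
    simpa only [sum_map, addLeftEmbedding_apply, spread_zero, mul_zero, Nat.cast_zero, sub_zero,
      Nat.abs_cast, cellTime] using hcell₀
  · have hcell := hsum (B ^ m + j) (((range (B ^ m)).erase j).map (addLeftEmbedding (B ^ m)))
      (by simp)
    simpa only [sum_map, addLeftEmbedding_apply, cellTime] using hcell

theorem exists_side_le_div_cellTime_rpow {α τ : ℝ} {P : ℕ} (hB : 1 < B) (hBR : B ≤ R)
    (hα : 0 ≤ α) (hRα : (R : ℝ) ^ α < P) (hτ : 0 < τ) {s : ℝ} (hs : 0 ≤ s) {d : ℕ} (hd : 0 < d) :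
    ∃ (m : ℕ) (t : ℝ), 0 ≤ t ∧ P ^ m * t = s ∧
      ∀ j < B ^ m, t ≤ τ / (cellTime B R d m j : ℝ) ^ α := by
  have hR : (0 : ℝ) ≤ R := R.cast_nonneg
  have hP : (0 : ℝ) < P := (Real.rpow_nonneg hR α).trans_lt hRα
  obtain ⟨m, hm⟩ := exists_mul_pow_le_mul_pow (Real.rpow_nonneg hR α) hRα hτ (s * (d * R) ^ α)
  refine ⟨m, s / P ^ m, by positivity, by field_simp, fun j hj ↦ ?_⟩
  have hn₀ : 0 < cellTime B R d m j := hd.trans_le (le_cellTime hB hBR d m j)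
  have hn : (cellTime B R d m j : ℝ) ≤ d * R ^ (m + 1) :=
    mod_cast Nat.mul_le_mul_left d (spread_lt_pow hB hBR (pow_add_lt_pow_succ hB hj)).le
  rw [div_le_div_iff₀ (by positivity) (by positivity)]
  calc s * (cellTime B R d m j : ℝ) ^ α ≤ s * (d * R ^ (m + 1)) ^ α := by gcongr
    _ = s * (d * R) ^ α * (R ^ α) ^ m := by
      rw [pow_succ', ← mul_assoc, Real.mul_rpow (by positivity) (by positivity),
        Real.rpow_pow_comm hR, mul_assoc]
    _ ≤ τ * P ^ m := hm

end CellTime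

/-- The residues modulo `P` of the lowest `m` digits of a number in base `B`, read in base `P`. For
`B = P ^ 2`, its values at `i` and at `i / P` are the two coordinates of cell `i` on the Z-order
(Morton) curve in a `P ^ m × P ^ m` grid. -/
def gridCoord (P B : ℕ) : ℕ → ℕ → ℕ
  | 0, _ => 0
  | m + 1, i => i % P + P * gridCoord P B m (i / B)

section GridCoord

variable {P B : ℕ}

theorem gridCoord_lt_pow (hP : 0 < P) (m i : ℕ) : gridCoord P B m i < P ^ m := by
  induction m generalizing i with
  | zero => simp [gridCoord]
  | succ m ih =>
    have hmod := Nat.mod_lt i hP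
    rw [gridCoord, pow_succ']
    nlinarith [ih (i / B)]

theorem gridCoord_lt_add_pow (hP : 0 < P) {k i l : ℕ} (m : ℕ) (h : i / B ^ k = l / B ^ k) :
    gridCoord P B m i < gridCoord P B m l + P ^ k := by
  induction k generalizing m i l with
  | zero => simp_all
  | succ k ih =>
    rw [pow_succ', ← Nat.div_div_eq_div_mul, ← Nat.div_div_eq_div_mul] at h
    cases m with
    | zero => simp [gridCoord, hP]
    | succ m =>
      have hmod := Nat.mod_lt i hP
      rw [gridCoord, gridCoord, pow_succ']
      linarith [Nat.mul_le_mul_left P (Nat.succ_le_of_lt (ih m h)), (l % P).zero_le]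

theorem exists_gridCoord_eq (hP : 0 < P) (m c : ℕ) {a b : ℕ} (ha : a < P ^ m) (hb : b < P ^ m) :
    ∃ i, i / (P ^ 2) ^ m = c ∧ gridCoord P (P ^ 2) m i = a ∧
      gridCoord P (P ^ 2) m (i / P) = b := by
  induction m generalizing a b with
  | zero => exact ⟨c, by simp_all [gridCoord]⟩
  | succ m ih =>
    rw [pow_succ'] at ha hb
    obtain ⟨i, hic, hia, hib⟩ := ih (Nat.div_lt_of_lt_mul ha) (Nat.div_lt_of_lt_mul hb)
    have hdiv : (a % P + P * (b % P + P * i)) / P = b % P + P * i := by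
      rw [Nat.add_mul_div_left _ _ hP, Nat.div_eq_of_lt (Nat.mod_lt a hP), zero_add]
    have hdiv' : (b % P + P * i) / P = i := by
      rw [Nat.add_mul_div_left _ _ hP, Nat.div_eq_of_lt (Nat.mod_lt b hP), zero_add]
    have hdiv2 : (a % P + P * (b % P + P * i)) / P ^ 2 = i := by
      rw [sq, ← Nat.div_div_eq_div_mul, hdiv, hdiv']
    refine ⟨a % P + P * (b % P + P * i), ?_, ?_, ?_⟩
    · rw [pow_succ', ← Nat.div_div_eq_div_mul, hdiv2, hic]
    · rw [gridCoord, hdiv2, hia, Nat.add_mul_mod_self_left, Nat.mod_mod, Nat.mod_add_div]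
    · rw [gridCoord, hdiv, sq, ← Nat.div_div_eq_div_mul, hdiv', ← sq, hib,
        Nat.add_mul_mod_self_left, Nat.mod_mod, Nat.mod_add_div]

theorem abs_gridCoord_sub_add_one_le (hP : 0 < P) {k i l : ℕ} (m : ℕ)
    (h : i / B ^ k = l / B ^ k) :
    |(gridCoord P B m i : ℝ) - gridCoord P B m l| + 1 ≤ (P : ℝ) ^ k := by
  have hil : (gridCoord P B m i : ℝ) + 1 ≤ gridCoord P B m l + (P : ℝ) ^ k :=
    mod_cast gridCoord_lt_add_pow hP m h
  have hli : (gridCoord P B m l : ℝ) + 1 ≤ gridCoord P B m i + (P : ℝ) ^ k :=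
    mod_cast gridCoord_lt_add_pow hP m h.symm
  rw [← le_sub_iff_add_le, abs_sub_le_iff]
  constructor <;> linarith

end GridCoord

section GridCell

variable {P m : ℕ} {u v t : ℝ}

/-- The closed cell of side `t` with number `i` on the Z-order curve, in the grid of `P ^ m × P ^ m`
cells with lower left corner `(u, v)`. -/
def gridCell (P m : ℕ) (u v t : ℝ) (i : ℕ) : Set (ℝ × ℝ) :=
  Set.Icc (u + gridCoord P (P ^ 2) m i * t) (u + gridCoord P (P ^ 2) m i * t + t) ×ˢ
    Set.Icc (v + gridCoord P (P ^ 2) m (i / P) * t) (v + gridCoord P (P ^ 2) m (i / P) * t + t)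

theorem Icc_prod_Icc_eq_biUnion_gridCell (hP : 0 < P) (ht : 0 ≤ t) :
    Set.Icc u (u + P ^ m * t) ×ˢ Set.Icc v (v + P ^ m * t) =
      ⋃ j ∈ range ((P ^ 2) ^ m), gridCell P m u v t ((P ^ 2) ^ m + j) := by
  have hIcc := Icc_add_mul_eq_biUnion (Nat.one_le_pow m P hP) ht
  push_cast at hIcc
  rw [hIcc, hIcc]
  ext z
  simp only [gridCell, Set.mem_prod, Set.mem_iUnion, mem_range, exists_prop]
  constructor
  · rintro ⟨⟨a, ha, hza⟩, b, hb, hzb⟩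
    obtain ⟨i, hi, rfl, rfl⟩ := exists_gridCoord_eq hP m 1 ha hb
    have hBm : 0 < (P ^ 2) ^ m := by positivity
    rw [Nat.div_eq_iff hBm] at hi
    obtain ⟨j, rfl⟩ := Nat.exists_eq_add_of_le (by omega : (P ^ 2) ^ m ≤ i)
    exact ⟨j, by omega, hza, hzb⟩
  · rintro ⟨j, -, hza, hzb⟩
    exact ⟨⟨_, gridCoord_lt_pow hP m _, hza⟩, _, gridCoord_lt_pow hP m _, hzb⟩

theorem norm_sub_le_of_mem_gridCell (hP : 0 < P) (ht : 0 ≤ t) {k i l : ℕ}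
    (h : i / (P ^ 2) ^ k = l / (P ^ 2) ^ k) {p q : ℝ × ℝ} (hp : p ∈ gridCell P m u v t i)
    (hq : q ∈ gridCell P m u v t l) : ‖p - q‖ ≤ P ^ k * t := by
  have h' : i / P / (P ^ 2) ^ k = l / P / (P ^ 2) ^ k := by
    rw [Nat.div_right_comm, h, Nat.div_right_comm]
  exact max_le
    ((abs_sub_le_of_mem_Icc hp.1 hq.1).trans
      (mul_le_mul_of_nonneg_right (abs_gridCoord_sub_add_one_le hP m h) ht))
    ((abs_sub_le_of_mem_Icc hp.2 hq.2).trans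
      (mul_le_mul_of_nonneg_right (abs_gridCoord_sub_add_one_le hP m h') ht))

theorem norm_sub_le_cellTime_of_mem_gridCell {R : ℕ} {α D : ℝ} (hP : 1 < P)
    (hPR : 2 * P ^ 2 ≤ R) (hα : 0 ≤ α) (hRα : (R : ℝ) ^ α ≤ P) (ht : 0 ≤ t)
    (htD : P ^ m * t ≤ 1 / (P * (2 * R) ^ α) * D) {d j l : ℕ} (hd : 0 < d) (hjl : j < l)
    (hl : l < (P ^ 2) ^ m) {p q : ℝ × ℝ} (hp : p ∈ gridCell P m u v t ((P ^ 2) ^ m + j))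
    (hq : q ∈ gridCell P m u v t ((P ^ 2) ^ m + l)) :
    ‖p - q‖ ≤ D * ((cellTime (P ^ 2) R d m l : ℝ) - cellTime (P ^ 2) R d m j) ^ α /
      (cellTime (P ^ 2) R d m l : ℝ) ^ α := by
  have hB : 1 < P ^ 2 := Nat.one_lt_pow two_ne_zero hP
  have hR : 0 < R := by omega
  have hil := Nat.add_lt_add_left hjl ((P ^ 2) ^ m)
  obtain ⟨k, hk, hk'⟩ := exists_div_pow_lt_and_div_pow_succ_eq hB hil
  have hS : (0 : ℝ) ≤ spread (P ^ 2) R ((P ^ 2) ^ m + l) - spread (P ^ 2) R ((P ^ 2) ^ m + j) :=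
    sub_nonneg.2 <| mod_cast (spread_strictMono hB (by omega : P ^ 2 ≤ R) hil).le
  simp only [cellTime, Nat.cast_mul]
  rw [mul_div_assoc, ← mul_sub, ← Real.div_rpow (by positivity) (by positivity),
    mul_div_mul_left _ _ (by positivity)]
  set ρ : ℝ := (spread (P ^ 2) R ((P ^ 2) ^ m + l) - spread (P ^ 2) R ((P ^ 2) ^ m + j)) /
    spread (P ^ 2) R ((P ^ 2) ^ m + l)
  calc ‖p - q‖ ≤ P ^ (k + 1) * t := norm_sub_le_of_mem_gridCell (by omega) ht hk' hp hq
    _ = P * P ^ k * t := by rw [pow_succ']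
    _ ≤ P * (P ^ m * ((2 * R) ^ α * ρ ^ α)) * t := by
      gcongr
      exact pow_le_pow_mul_spread_ratio_rpow hB hPR hα hRα hk (pow_add_lt_pow_succ hB hl)
    _ = P * (2 * R) ^ α * (P ^ m * t) * ρ ^ α := by ring
    _ ≤ P * (2 * R) ^ α * (1 / (P * (2 * R) ^ α) * D) * ρ ^ α := by
      have : 0 ≤ ρ := by positivity
      gcongr
    _ = D * ρ ^ α := by field_simp

end GridCell

/-- The covering lemma (Lemma 2.7 of the paper). A compact square `K ⊆ ℝ²` is written as
`[u, u+s] × [v, v+s]`, `s ≥ 0`; its diameter for the sup-norm is `s`. The covering squares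
`Λ_j` are written `[cx j, cx j + sl j] × [cy j, cy j + sl j]`. The norm on `ℝ × ℝ` is the
sup-norm. -/
theorem stmt_7 (α β : ℝ) (hα0 : 0 < α) (hα : α < 1 / 2) (hβ : 2 * α < β) :
    ∃ c > (0 : ℝ), ∀ D > (0 : ℝ), ∀ u v s : ℝ, 0 ≤ s → s ≤ c * D →
      ∀ τ > (0 : ℝ), ∀ η > (0 : ℝ), ∀ N : ℕ, 1 ≤ N →
        ∃ q : ℕ, 1 ≤ q ∧ ∃ n : ℕ → ℕ, ∃ x y cx cy sl : ℕ → ℝ,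
          (∀ j < q, 0 ≤ sl j) ∧
          -- (a)
          (N ≤ n 0 ∧ ∀ j : ℕ, j + 2 ≤ q → n j + N ≤ n (j + 1)) ∧
          -- (b)
          (Set.Icc u (u + s) ×ˢ Set.Icc v (v + s) =
            ⋃ j ∈ Finset.range q,
              Set.Icc (cx j) (cx j + sl j) ×ˢ Set.Icc (cy j) (cy j + sl j)) ∧
          (∀ j < q,
            Set.Icc (cx j) (cx j + sl j) ⊆ Set.Icc (x j) (x j + τ / (n j : ℝ) ^ α) ∧
            Set.Icc (cy j) (cy j + sl j) ⊆ Set.Icc (y j) (y j + τ / (n j : ℝ) ^ α)) ∧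
          -- (c)
          (∀ j l : ℕ, j < l → l < q →
            ∀ lam ∈ Set.Icc (cx j) (cx j + sl j) ×ˢ Set.Icc (cy j) (cy j + sl j),
            ∀ mu ∈ Set.Icc (cx l) (cx l + sl l) ×ˢ Set.Icc (cy l) (cy l + sl l),
              ‖lam - mu‖ ≤ D * ((n l : ℝ) - (n j : ℝ)) ^ α / (n l : ℝ) ^ α) ∧
          -- (d)
          (∑ j ∈ Finset.range q, 1 / (n j : ℝ) ^ β ≤ η) ∧
          -- (e)
          (∀ j < q, ∑ l ∈ (Finset.range q).erase j,
              1 / |(n l : ℝ) - (n j : ℝ)| ^ β ≤ η) := by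
  obtain ⟨P, R, hP, hPR, hRα, hPβ⟩ := exists_grid_parameters hα0.le hα hβ
  have hB : 1 < P ^ 2 := Nat.one_lt_pow two_ne_zero hP
  have hBR : P ^ 2 ≤ R := by omega
  have hR : 0 < R := by omega
  refine ⟨1 / (P * (2 * R) ^ α), by positivity, fun D _ u v s hs hsD τ hτ η hη N _ ↦ ?_⟩
  obtain ⟨d, hNd, hd, hsum⟩ :=
    exists_scale_sum_one_div_cellTime_rpow_le hB hPR (by linarith) hPβ hη N
  obtain ⟨m, t, ht, rfl, hside⟩ := exists_side_le_div_cellTime_rpow hB hBR hα0.le hRα hτ hs hd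
  let x (j : ℕ) : ℝ := u + gridCoord P (P ^ 2) m ((P ^ 2) ^ m + j) * t
  let y (j : ℕ) : ℝ := v + gridCoord P (P ^ 2) m (((P ^ 2) ^ m + j) / P) * t
  refine ⟨(P ^ 2) ^ m, Nat.one_le_pow _ _ (by omega), cellTime (P ^ 2) R d m, x, y, x, y,
    fun _ ↦ t, fun _ _ ↦ ht, ⟨hNd.trans (le_cellTime hB hBR d m 0), fun j _ ↦ ?_⟩,
    Icc_prod_Icc_eq_biUnion_gridCell (by omega) ht, fun j hj ↦ ⟨?_, ?_⟩, ?_,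
    (hsum m).1, fun j _ ↦ (hsum m).2 j⟩
  · exact (Nat.add_le_add_left hNd _).trans (cellTime_add_le_cellTime_succ hB hBR d m j)
  · exact Set.Icc_subset_Icc_right (by gcongr; exact hside j hj)
  · exact Set.Icc_subset_Icc_right (by gcongr; exact hside j hj)
  · exact fun j l hjl hl lam hlam mu hmu ↦
      norm_sub_le_cellTime_of_mem_gridCell hP hPR hα0.le hRα.le ht hsD hd hjl hl hlam hmu
end
end
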